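/- arXiv:1208.0446 — 5 statements merged into one kernel-verified Lean document; each statement's English description precedes it below -/
import Mathlib

section
/- Let A_i (i = 1,…,n) be finite nonempty sets, and for each a ∈ A_i let f^a_i : ℝⁿ → ℝ be polyhedral, order-preserving, additively homogeneous and convex; define f_i(x) = min_{a∈A_i} f^a_i(x) and, for strategies σ, σ' ∈ ∏_i A_i, let f^{(σ)}_i = f^{σ(i)}_i and f^{(σ')}_i = f^{σ'(i)}_i. Suppose t ↦ tη + v is an invariant half-line of f^{(σ)} and that f^{(σ')}(tη + v) = f(tη + v) for all sufficiently large t. Then the cycle times of f^{(σ)} and f^{(σ')} exist and satisfy χ(f^{(σ')}) ≤ χ(f^{(σ)}) = η. -/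
open Filter Topology

/-- A function `g : ℝⁿ → ℝ` is polyhedral: there is a covering of `ℝⁿ` by finitely many
convex polyhedra (finite intersections of half-spaces) on each of which `g` is affine. -/
def IsPolyhedralFun {n : ℕ} (g : (Fin n → ℝ) → ℝ) : Prop :=
  ∃ (m : ℕ) (C : Fin m → Set (Fin n → ℝ)),
    (⋃ k, C k) = Set.univ ∧
    ∀ k : Fin m,
      (∃ (p : ℕ) (a : Fin p → Fin n → ℝ) (b : Fin p → ℝ),
        C k = {x | ∀ l, ∑ j, a l j * x j ≤ b l}) ∧
      ∃ (A : Fin n → ℝ) (c : ℝ), ∀ x ∈ C k, g x = (∑ j, A j * x j) + c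

/-!
By a theorem of Kohlberg, a nonexpansive piecewise affine map `g` of a finite-dimensional normed
space has an invariant half-line, hence a cycle time. Let `y s` be the fixed point of
`y ↦ g ((1 - s) • y)`. Along an ultrafilter `s → 0⁺` it solves a single affine equation
`y s = L ((1 - s) • y s)`, so it agrees with a meromorphic function of `s`; since `s • y s` is
bounded, the pole is simple and `y s = s⁻¹ • η + v + o(1)`. Nonexpansiveness then gives
`g (t • η + v) - ((t + 1) • η + v) → 0` for `t = s⁻¹ - 1`. This difference is a continuous
selection of finitely many affine functions of `t`, each of which is zero or eventually bounded
away from zero, so it vanishes for all large `t`.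

If moreover `g` is monotone and `g (t • η + v) ≤ (t + 1) • η + v` for some `η`, `v` and all large
`t`, then by induction the orbit of a point of this half-line stays below the half-line, and the
cycle time of `g` is at most `η`.
-/

section CycleTime

variable {E : Type*} [NormedAddCommGroup E] [NormedSpace ℝ E] {g : E → E} {η v χ y : E}

/-- The vector `χ` is the cycle time of `g`: every orbit of `g` grows like `k • χ`. -/
def HasCycleTime (g : E → E) (χ : E) : Prop :=
  ∀ y : E, Tendsto (fun k : ℕ ↦ (k : ℝ)⁻¹ • g^[k] y) atTop (𝓝 χ)

/-- The half-line `t ↦ t • η + v` is invariant under `g`. -/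
def IsInvariantHalfLine (g : E → E) (η v : E) : Prop :=
  ∀ᶠ t : ℝ in atTop, g (t • η + v) = (t + 1) • η + v

lemma HasCycleTime.tendsto_div {ι : Type*} [Fintype ι] {g : (ι → ℝ) → ι → ℝ} {χ : ι → ℝ}
    (h : HasCycleTime g χ) (y : ι → ℝ) :
    Tendsto (fun (k : ℕ) i ↦ g^[k] y i / k) atTop (𝓝 χ) := by
  exact (h y).congr fun k ↦ funext fun i ↦ (div_eq_inv_mul (g^[k] y i) (k : ℝ)).symm

lemma hasCycleTime_of_tendsto (hg : LipschitzWith 1 g)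
    (h : Tendsto (fun k : ℕ ↦ (k : ℝ)⁻¹ • g^[k] y) atTop (𝓝 χ)) : HasCycleTime g χ := by
  intro z
  have hbound : Tendsto (fun k : ℕ ↦ (k : ℝ)⁻¹ * dist z y) atTop (𝓝 0) := by
    simpa using (tendsto_inv_atTop_nhds_zero_nat (𝕜 := ℝ)).mul_const (dist z y)
  have hdiff : Tendsto (fun k : ℕ ↦ (k : ℝ)⁻¹ • (g^[k] z - g^[k] y)) atTop (𝓝 0) := by
    refine squeeze_zero_norm (fun k ↦ ?_) hbound
    rw [norm_smul, Real.norm_of_nonneg (by positivity), ← dist_eq_norm]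
    gcongr
    simpa using (hg.iterate k).dist_le_mul z y
  simpa [← smul_add] using hdiff.add h

lemma tendsto_inv_smul_halfLine (η v : E) (T : ℝ) :
    Tendsto (fun k : ℕ ↦ (k : ℝ)⁻¹ • ((T + k) • η + v)) atTop (𝓝 η) := by
  have hlim : Tendsto (fun k : ℕ ↦ η + (k : ℝ)⁻¹ • (T • η + v)) atTop (𝓝 η) := by
    simpa using
      ((tendsto_inv_atTop_nhds_zero_nat (𝕜 := ℝ)).smul_const (T • η + v)).const_add η
  refine hlim.congr' ?_
  filter_upwards [eventually_ne_atTop 0] with k hk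
  rw [add_smul, add_right_comm, smul_add _ _ ((k : ℝ) • η), inv_smul_smul₀ (by exact_mod_cast hk),
    add_comm]

lemma IsInvariantHalfLine.hasCycleTime (h : IsInvariantHalfLine g η v) (hg : LipschitzWith 1 g) :
    HasCycleTime g η := by
  obtain ⟨T, hT⟩ := eventually_atTop.1 h
  have horbit (k : ℕ) : g^[k] (T • η + v) = (T + k) • η + v := by
    induction k with
    | zero => simp
    | succ k ih =>
      rw [Function.iterate_succ_apply', ih, hT _ (by simp), Nat.cast_succ, add_assoc]
  refine hasCycleTime_of_tendsto hg (y := T • η + v) ?_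
  simpa only [horbit] using tendsto_inv_smul_halfLine η v T

lemma HasCycleTime.le_of_eventually_le [PartialOrder E] [PosSMulMono ℝ E] [OrderClosedTopology E]
    (hχ : HasCycleTime g χ) (hg : Monotone g)
    (h : ∀ᶠ t : ℝ in atTop, g (t • η + v) ≤ (t + 1) • η + v) : χ ≤ η := by
  obtain ⟨T, hT⟩ := eventually_atTop.1 h
  have horbit (k : ℕ) : g^[k] (T • η + v) ≤ (T + k) • η + v := by
    refine hg.seq_le_seq (x := fun k ↦ g^[k] (T • η + v)) (y := fun k : ℕ ↦ (T + k) • η + v)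
      k (by simp) (fun j _ ↦ (Function.iterate_succ_apply' g j _).le) fun j _ ↦ ?_
    simpa [add_assoc] using hT (T + j) (by simp)
  exact le_of_tendsto_of_tendsto' (hχ (T • η + v)) (tendsto_inv_smul_halfLine η v T)
    fun k ↦ smul_le_smul_of_nonneg_left (horbit k) (by positivity)

end CycleTime

section AffineSelection

variable {V F : Type*} [AddCommGroup V] [Module ℝ V] [AddCommGroup F] [Module ℝ F]

/-- The map `g` is a selection of finitely many affine maps. In finite dimension the continuous
affine selections are the piecewise affine maps, and no polyhedral covering has to be carried
along. -/
def IsAffineSelection (g : V → F) : Prop :=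
  ∃ S : Set (V →ᵃ[ℝ] F), S.Finite ∧ ∀ x, ∃ L ∈ S, g x = L x

lemma IsPolyhedralFun.isAffineSelection {n : ℕ} {g : (Fin n → ℝ) → ℝ} (hg : IsPolyhedralFun g) :
    IsAffineSelection g := by
  obtain ⟨m, C, hcover, hC⟩ := hg
  choose _ A c hA using hC
  let L (k : Fin m) : (Fin n → ℝ) →ᵃ[ℝ] ℝ :=
    (∑ j, A k j • LinearMap.proj j).toAffineMap + AffineMap.const ℝ _ (c k)
  refine ⟨Set.range L, Set.finite_range L, fun x ↦ ?_⟩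
  obtain ⟨k, hk⟩ := Set.mem_iUnion.1 (hcover ▸ Set.mem_univ x)
  exact ⟨L k, ⟨k, rfl⟩, by simp [L, hA k x hk]⟩

lemma IsAffineSelection.pi {ι : Type*} [Finite ι] {G : ι → Type*} [∀ i, AddCommGroup (G i)]
    [∀ i, Module ℝ (G i)] {g : V → ∀ i, G i} (hg : ∀ i, IsAffineSelection fun x ↦ g x i) :
    IsAffineSelection g := by
  choose S hS hsel using hg
  refine ⟨AffineMap.pi '' Set.univ.pi S, (Set.Finite.pi hS).image _, fun x ↦ ?_⟩
  choose L hL hgL using fun i ↦ hsel i x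
  exact ⟨AffineMap.pi L, ⟨L, fun i _ ↦ hL i, rfl⟩, funext hgL⟩

lemma IsAffineSelection.comp_sub {W : Type*} [AddCommGroup W] [Module ℝ W] {g : V → F}
    (hg : IsAffineSelection g) (a : W →ᵃ[ℝ] V) (b : W →ᵃ[ℝ] F) :
    IsAffineSelection fun x ↦ g (a x) - b x := by
  obtain ⟨S, hS, hsel⟩ := hg
  refine ⟨(fun L ↦ L.comp a - b) '' S, hS.image _, fun x ↦ ?_⟩
  obtain ⟨L, hL, hgL⟩ := hsel (a x)
  exact ⟨L.comp a - b, ⟨L, hL, rfl⟩, by simp [hgL]⟩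

end AffineSelection

section Rigidity

variable {E : Type*} [NormedAddCommGroup E] [NormedSpace ℝ E]

lemma affineMap_eventually_eq_zero_or_le_norm (L : ℝ →ᵃ[ℝ] E) :
    ∀ᶠ c in 𝓝[>] (0 : ℝ), ∀ᶠ t in atTop, L t = 0 ∨ c ≤ ‖L t‖ := by
  have hL (t : ℝ) : L t = t • L.linear 1 + L 0 := by
    simpa [← map_smul] using congrFun L.decomp t
  rcases eq_or_ne (L.linear 1) 0 with hp | hp
  · have hconst (t : ℝ) : L t = L 0 := by rw [hL t, hp, smul_zero, zero_add]
    rcases eq_or_ne (L 0) 0 with hq | hq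
    · exact .of_forall fun c ↦ .of_forall fun t ↦ .inl ((hconst t).trans hq)
    · filter_upwards [Ioc_mem_nhdsGT (norm_pos_iff.2 hq)] with c hc
      exact .of_forall fun t ↦ .inr (hc.2.trans_eq (by rw [hconst t]))
  · have htop : Tendsto (fun t ↦ ‖L t‖) atTop atTop := by
      refine tendsto_atTop_mono (f := fun t ↦ t * ‖L.linear 1‖ - ‖L 0‖) (fun t ↦ ?_) <|
        tendsto_atTop_add_const_right _ _ (tendsto_id.atTop_mul_const (norm_pos_iff.2 hp))
      have h := norm_sub_le (L t) (L 0)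
      rw [hL t, add_sub_cancel_right, norm_smul] at h
      rw [hL t]
      have := mul_le_mul_of_nonneg_right (le_abs_self t) (norm_nonneg (L.linear 1))
      simp only [Real.norm_eq_abs] at h
      linarith
    exact .of_forall fun c ↦ (htop.eventually_ge_atTop c).mono fun _ ↦ .inr

lemma IsAffineSelection.eventually_eq_zero {ψ : ℝ → E} (hψ : IsAffineSelection ψ)
    (hcont : Continuous ψ) {l : Filter ℝ} [l.NeBot] (hl : l ≤ atTop) (hlim : Tendsto ψ l (𝓝 0)) :
    ∀ᶠ t in atTop, ψ t = 0 := by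
  obtain ⟨S, hS, hsel⟩ := hψ
  obtain ⟨c, hgap, hc : 0 < c⟩ := ((hS.eventually_all.2 fun L _ ↦
    affineMap_eventually_eq_zero_or_le_norm L).and self_mem_nhdsWithin).exists
  obtain ⟨T, hT⟩ := eventually_atTop.1 (hS.eventually_all.2 hgap)
  have hdich (t : ℝ) (ht : T ≤ t) : ψ t = 0 ∨ c ≤ ‖ψ t‖ := by
    obtain ⟨L, hL, hψL⟩ := hsel t
    simpa only [hψL] using hT t ht L hL
  obtain ⟨t₀, hsmall, ht₀⟩ : ∃ t, ‖ψ t‖ < c ∧ T ≤ t :=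
    ((hlim.norm.eventually_lt_const (by simpa)).and (hl (eventually_ge_atTop T))).exists
  have hzero : ψ t₀ = 0 := (hdich t₀ ht₀).resolve_right hsmall.not_ge
  filter_upwards [eventually_ge_atTop T] with t ht
  refine (hdich t ht).resolve_right fun hlarge ↦ ?_
  obtain ⟨r, hr, hrc⟩ : c / 2 ∈ (fun t ↦ ‖ψ t‖) '' Set.Ici T :=
    isPreconnected_Ici.intermediate_value ht₀ ht hcont.norm.continuousOn
      ⟨by simpa only [hzero, norm_zero] using (half_pos hc).le, by linarith⟩
  rcases hdich r hr with h | h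
  · simp only [h, norm_zero] at hrc
    linarith
  · simp only at hrc
    linarith

end Rigidity

section Meromorphic

lemma analyticAt_det {ι : Type*} [Fintype ι] [DecidableEq ι] {M : ℝ → Matrix ι ι ℝ} {z : ℝ}
    (hM : ∀ i j, AnalyticAt ℝ (fun s ↦ M s i j) z) : AnalyticAt ℝ (fun s ↦ (M s).det) z := by
  simp only [Matrix.det_apply, Units.smul_def, zsmul_eq_mul]
  fun_prop

lemma meromorphicAt_matrix_inv_apply {ι : Type*} [Fintype ι] [DecidableEq ι]
    {M : ℝ → Matrix ι ι ℝ} {z : ℝ} (hM : ∀ i j, AnalyticAt ℝ (fun s ↦ M s i j) z) (i j : ι) :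
    MeromorphicAt (fun s ↦ (M s)⁻¹ i j) z := by
  simp only [Matrix.inv_def, Ring.inverse_eq_inv', Matrix.smul_apply, smul_eq_mul,
    Matrix.adjugate_apply]
  refine (analyticAt_det hM).meromorphicAt.inv.mul (analyticAt_det fun k l ↦ ?_).meromorphicAt
  rcases eq_or_ne k j with rfl | hk
  · simpa using analyticAt_const
  · simpa [hk] using hM k l

variable {E : Type*} [NormedAddCommGroup E] [NormedSpace ℝ E]

lemma exists_meromorphicAt_solution [FiniteDimensional ℝ E] {u : ℝ → E →ₗ[ℝ] E}
    (hu : ∀ x, AnalyticOnNhd ℝ (fun s ↦ u s x) Set.univ) {s₀ : ℝ} (hs₀ : LinearMap.det (u s₀) ≠ 0)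
    (z : ℝ) (e : E) :
    ∃ R : ℝ → E, MeromorphicAt R z ∧ ∀ᶠ s in 𝓝[≠] z, ∀ y, u s y = e → y = R s := by
  let b := Module.finBasis ℝ E
  let M (s : ℝ) := LinearMap.toMatrix b b (u s)
  have hM (i j) : AnalyticOnNhd ℝ (fun s ↦ M s i j) Set.univ := by
    simp only [M, LinearMap.toMatrix_apply]
    exact fun s hs ↦ (b.coord i).toContinuousLinearMap.analyticAt _ |>.comp (hu (b j) s hs)
  refine ⟨fun s ↦ Matrix.toLin b b (M s)⁻¹ e, ?_, ?_⟩
  · simp only [Matrix.toLin_apply, Matrix.mulVec, dotProduct]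
    exact .fun_sum fun i _ ↦ (MeromorphicAt.fun_sum fun j _ ↦
      (meromorphicAt_matrix_inv_apply (fun k l ↦ hM k l z trivial) i j).mul (.const _ z)).smul
        (.const _ z)
  · have hdet : ∀ᶠ s in 𝓝[≠] z, (M s).det ≠ 0 := by
      by_contra hfreq
      refine hs₀ ?_
      rw [← LinearMap.det_toMatrix b]
      exact AnalyticOnNhd.eqOn_zero_of_preconnected_of_frequently_eq_zero
        (fun s _ ↦ analyticAt_det fun i j ↦ hM i j s trivial) isPreconnected_univ (Set.mem_univ z)
        (by simpa only [not_eventually, not_not] using hfreq) (Set.mem_univ s₀)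
    filter_upwards [hdet] with s hs y hy
    rw [← hy, ← Matrix.toLin_toMatrix b b (u s), ← Matrix.toLin_mul_apply,
      Matrix.nonsing_inv_mul _ (isUnit_iff_ne_zero.2 hs), Matrix.toLin_one, LinearMap.id_apply]

lemma exists_analyticAt_of_meromorphicAt_of_isBoundedUnder {f : ℝ → E} {z : ℝ}
    (hf : MeromorphicAt f z) {l : Filter ℝ} [l.NeBot] (hl : l ≤ 𝓝[≠] z)
    (hbdd : l.IsBoundedUnder (· ≤ ·) fun s ↦ ‖f s‖) :
    ∃ F : ℝ → E, AnalyticAt ℝ F z ∧ f =ᶠ[𝓝[≠] z] F := by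
  refine hf.meromorphicOrderAt_nonneg_iff.1 (not_lt.1 fun hneg ↦ ?_)
  have hpole := tendsto_norm_cobounded_atTop.comp (tendsto_cobounded_of_meromorphicOrderAt_neg hneg)
  exact not_isBoundedUnder_of_tendsto_atTop (hpole.mono_left hl) hbdd

lemma exists_tendsto_sub_inv_smul {y R : ℝ → E} (hR : MeromorphicAt R 0) {l : Filter ℝ} [l.NeBot]
    (hl : l ≤ 𝓝[≠] 0) (hyR : y =ᶠ[l] R) (hbdd : l.IsBoundedUnder (· ≤ ·) fun s ↦ ‖s • y s‖) :
    ∃ η v : E, Tendsto (fun s ↦ y s - s⁻¹ • η) l (𝓝 v) := by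
  have hsR : (fun s ↦ ‖s • y s‖) =ᶠ[l] fun s ↦ ‖s • R s‖ := hyR.mono fun s hs ↦ by simp only [hs]
  obtain ⟨F, hF, hRF⟩ := exists_analyticAt_of_meromorphicAt_of_isBoundedUnder
    ((MeromorphicAt.id 0).smul hR) hl (hbdd.mono_le hsR.symm.le)
  refine ⟨F 0, deriv F 0, Tendsto.congr' ?_
    (hF.differentiableAt.hasDerivAt.tendsto_slope_zero.mono_left hl)⟩
  filter_upwards [hyR, hl hRF, hl self_mem_nhdsWithin] with s hs hsF (hs0 : s ≠ 0)
  rw [zero_add, ← hsF, smul_sub, hs]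
  simp [inv_smul_smul₀ hs0]

end Meromorphic

section Kohlberg

variable {E : Type*} [NormedAddCommGroup E] [NormedSpace ℝ E] {g : E → E}

lemma exists_discounted_fixedPoint [CompleteSpace E] (hg : LipschitzWith 1 g) {s : ℝ}
    (hs : s ∈ Set.Ioo 0 1) : ∃ y, g ((1 - s) • y) = y := by
  have hcontr : ContractingWith ‖1 - s‖₊ fun y ↦ g ((1 - s) • y) := by
    refine ⟨?_, one_mul ‖1 - s‖₊ ▸ hg.comp (lipschitzWith_smul (1 - s))⟩
    rw [← NNReal.coe_lt_coe, coe_nnnorm, Real.norm_of_nonneg (by linarith [hs.2])]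
    simpa using hs.1
  exact ⟨_, hcontr.fixedPoint_isFixedPt⟩

lemma norm_smul_discounted_fixedPoint_le (hg : LipschitzWith 1 g) {s : ℝ} (hs : s ∈ Set.Ioo 0 1)
    {y : E} (hy : g ((1 - s) • y) = y) : ‖s • y‖ ≤ ‖g 0‖ := by
  have hdist : ‖y - g 0‖ ≤ (1 - s) * ‖y‖ := by
    simpa [hy, dist_eq_norm, norm_smul, abs_of_pos (sub_pos.2 hs.2)] using
      hg.dist_le_mul ((1 - s) • y) 0
  have htri := norm_sub_norm_le y (g 0)
  rw [norm_smul, Real.norm_of_nonneg hs.1.le]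
  linarith

lemma exists_tendsto_discounted_sub_inv_smul [FiniteDimensional ℝ E] (hg : LipschitzWith 1 g)
    (hsel : IsAffineSelection g) {y : ℝ → E} {l : Ultrafilter ℝ} (hl : ↑l ≤ 𝓝[>] (0 : ℝ))
    (hy : ∀ᶠ s in l, g ((1 - s) • y s) = y s) :
    ∃ η v : E, Tendsto (fun s ↦ y s - s⁻¹ • η) l (𝓝 v) := by
  obtain ⟨S, hS, hgS⟩ := hsel
  obtain ⟨L, -, hgL⟩ : ∃ L ∈ S, ∀ᶠ s in l, g ((1 - s) • y s) = L ((1 - s) • y s) :=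
    (l.eventually_exists_mem_iff hS).1 (.of_forall fun s ↦ hgS _)
  have hl' : ↑l ≤ 𝓝[≠] (0 : ℝ) := hl.trans (nhdsGT_le_nhdsNE 0)
  let u (s : ℝ) : E →ₗ[ℝ] E := LinearMap.id - (1 - s) • L.linear
  obtain ⟨R, hR, hRu⟩ := exists_meromorphicAt_solution (u := u) (s₀ := 1)
    (fun x s _ ↦ by simp only [u, LinearMap.sub_apply, LinearMap.smul_apply]; fun_prop)
    (by simp [u]) 0 (L 0)
  refine exists_tendsto_sub_inv_smul hR hl' ?_ ⟨‖g 0‖, eventually_map.2 ?_⟩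
  · filter_upwards [hy, hgL, hl' hRu] with s hys hLs hRs
    refine hRs _ (sub_eq_iff_eq_add'.2 ?_)
    calc y s = L ((1 - s) • y s) := hys.symm.trans hLs
      _ = (1 - s) • L.linear (y s) + L 0 := by simpa using congrFun L.decomp ((1 - s) • y s)
  · filter_upwards [hy, hl (Ioo_mem_nhdsGT one_pos)] with s hys hs
    exact norm_smul_discounted_fixedPoint_le hg hs hys

lemma tendsto_halfLine_defect (hg : LipschitzWith 1 g) {y : ℝ → E} {l : Filter ℝ}
    (hl : l ≤ 𝓝[>] (0 : ℝ)) (hy : ∀ᶠ s in l, g ((1 - s) • y s) = y s) {η v : E}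
    (hlim : Tendsto (fun s ↦ y s - s⁻¹ • η) l (𝓝 v)) :
    Tendsto (fun s : ℝ ↦ g ((s⁻¹ - 1) • η + v) - (s⁻¹ • η + v)) l (𝓝 0) := by
  have hs : Tendsto (fun s : ℝ ↦ 1 - s) l (𝓝 1) := by
    simpa using (tendsto_id'.2 (hl.trans nhdsWithin_le_nhds)).const_sub 1
  have hpoint : Tendsto (fun s ↦ (s⁻¹ - 1) • η + v - (1 - s) • y s) l (𝓝 0) := by
    have h : Tendsto (fun s ↦ v - (1 - s) • (y s - s⁻¹ • η)) l (𝓝 0) := by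
      simpa using (hs.smul hlim).const_sub v
    refine h.congr' ?_
    filter_upwards [hl self_mem_nhdsWithin] with s (hs : 0 < s)
    have : (1 - s) * s⁻¹ = s⁻¹ - 1 := by field_simp
    rw [smul_sub, smul_smul, this]
    abel
  have himage : Tendsto (fun s ↦ g ((s⁻¹ - 1) • η + v) - g ((1 - s) • y s)) l (𝓝 0) :=
    squeeze_zero_norm (fun s ↦ by simpa [dist_eq_norm] using hg.dist_le_mul _ _)
      (by simpa using hpoint.norm)
  have hsum := himage.add (hlim.sub_const v)
  rw [sub_self, add_zero] at hsum
  refine hsum.congr' ?_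
  filter_upwards [hy] with s hys
  rw [hys]
  abel

theorem exists_isInvariantHalfLine [FiniteDimensional ℝ E] (hg : LipschitzWith 1 g)
    (hsel : IsAffineSelection g) : ∃ η v : E, IsInvariantHalfLine g η v := by
  have := FiniteDimensional.complete ℝ E
  choose! y hy using fun s (hs : s ∈ Set.Ioo (0 : ℝ) 1) ↦ exists_discounted_fixedPoint hg hs
  let l := Ultrafilter.of (𝓝[>] (0 : ℝ))
  have hl : ↑l ≤ 𝓝[>] (0 : ℝ) := Ultrafilter.of_le _
  have hIoo : ∀ᶠ s in l, s ∈ Set.Ioo (0 : ℝ) 1 := hl (Ioo_mem_nhdsGT one_pos)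
  have hyl : ∀ᶠ s in l, g ((1 - s) • y s) = y s := hIoo.mono hy
  obtain ⟨η, v, hlim⟩ := exists_tendsto_discounted_sub_inv_smul hg hsel hl hyl
  let a : ℝ →ᵃ[ℝ] E := (LinearMap.toSpanSingleton ℝ E η).toAffineMap + AffineMap.const ℝ ℝ v
  let b : ℝ →ᵃ[ℝ] E := a + AffineMap.const ℝ ℝ η
  have hab : IsAffineSelection fun t ↦ g (a t) - b t := hsel.comp_sub a b
  have htop : Tendsto (fun s : ℝ ↦ s⁻¹ - 1) l atTop :=
    tendsto_atTop_add_const_right _ (-1) (tendsto_inv_nhdsGT_zero.mono_left hl)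
  have hzero : Tendsto (fun t ↦ g (a t) - b t) (map (fun s : ℝ ↦ s⁻¹ - 1) l) (𝓝 0) := by
    refine tendsto_map'_iff.2 <| (tendsto_halfLine_defect hg hl hyl hlim).congr fun s ↦ ?_
    simp [a, b, sub_smul, sub_add_eq_add_sub]
  refine ⟨η, v, (hab.eventually_eq_zero ?_ htop hzero).mono fun t ht ↦ ?_⟩
  · exact (hg.continuous.comp a.continuous_of_finiteDimensional).sub
      b.continuous_of_finiteDimensional
  · rw [sub_eq_zero] at ht
    simpa [a, b, add_smul, add_right_comm] using ht

end Kohlberg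

lemma lipschitzWith_one_of_monotone_of_additivelyHomogeneous {ι : Type*} [Fintype ι]
    {h : (ι → ℝ) → ℝ} (hmono : Monotone h)
    (hadd : ∀ (c : ℝ) (x : ι → ℝ), h (fun j ↦ c + x j) = c + h x) : LipschitzWith 1 h := by
  refine .of_le_add fun x y ↦ ?_
  rw [add_comm, ← hadd]
  refine hmono fun j ↦ ?_
  have := (le_abs_self _).trans (dist_le_pi_dist x y j)
  linarith

theorem exists_hasCycleTime_le {E : Type*} [NormedAddCommGroup E] [NormedSpace ℝ E]
    [FiniteDimensional ℝ E] [PartialOrder E] [PosSMulMono ℝ E] [OrderClosedTopology E]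
    {g : E → E} (hg : LipschitzWith 1 g) (hmono : Monotone g) (hsel : IsAffineSelection g)
    {η v : E} (hle : ∀ᶠ t : ℝ in atTop, g (t • η + v) ≤ (t + 1) • η + v) :
    ∃ χ : E, HasCycleTime g χ ∧ χ ≤ η := by
  obtain ⟨χ, w, hinv⟩ := exists_isInvariantHalfLine hg hsel
  have hχ : HasCycleTime g χ := hinv.hasCycleTime hg
  exact ⟨χ, hχ, hχ.le_of_eventually_le hmono hle⟩

theorem improved_policy_cycleTime_le_general {ι : Type*} [Fintype ι] {A : ι → Type*}
    [∀ i, Finite (A i)] {fa : ∀ i, A i → (ι → ℝ) → ℝ} (hsel : ∀ i a, IsAffineSelection (fa i a))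
    (hmono : ∀ i a, Monotone (fa i a))
    (hadd : ∀ i a (c : ℝ) (x : ι → ℝ), fa i a (fun j ↦ c + x j) = c + fa i a x)
    {σ σ' : ∀ i, A i} {η v : ι → ℝ} (hinv : IsInvariantHalfLine (fun w i ↦ fa i (σ i) w) η v)
    (hmin : ∀ᶠ t : ℝ in atTop, ∀ i, fa i (σ' i) (t • η + v) = ⨅ a, fa i a (t • η + v)) :
    ∃ χ' : ι → ℝ, HasCycleTime (fun w i ↦ fa i (σ' i) w) χ' ∧ χ' ≤ η ∧
      HasCycleTime (fun w i ↦ fa i (σ i) w) η := by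
  have hlip (τ : ∀ i, A i) : LipschitzWith 1 fun w i ↦ fa i (τ i) w :=
    .of_dist_le_mul fun x y ↦ (dist_pi_le_iff (by positivity)).2 fun i ↦
      (lipschitzWith_one_of_monotone_of_additivelyHomogeneous (hmono i _) (hadd i _)).dist_le_mul
        x y
  have hle : ∀ᶠ t : ℝ in atTop, (fun i ↦ fa i (σ' i) (t • η + v)) ≤ (t + 1) • η + v := by
    filter_upwards [hinv, hmin] with t hσ hσ'
    rw [← hσ]
    exact fun i ↦ (hσ' i).trans_le (ciInf_le (Set.finite_range _).bddBelow (σ i))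
  obtain ⟨χ', hχ', hχ'η⟩ := exists_hasCycleTime_le (hlip σ') (fun _ _ h i ↦ hmono i _ h)
    (.pi fun i ↦ hsel i _) hle
  exact ⟨χ', hχ', hχ'η, hinv.hasCycleTime (hlip σ)⟩

/-- Let `A i` be finite nonempty action sets, `f^a_i : ℝⁿ → ℝ`
polyhedral, order-preserving, additively homogeneous, convex maps; let
`f_i(x) = min_{a ∈ A i} f^a_i(x)` and, for strategies `σ, σ'`, `f^{(σ)}_i = f^{σ(i)}_i`.
If `t ↦ tη + v` is an invariant half-line of `f^{(σ)}` and `f^{(σ')}(tη+v) = f(tη+v)` for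
all sufficiently large `t`, then the cycle times of `f^{(σ)}` and `f^{(σ')}` exist and
satisfy `χ(f^{(σ')}) ≤ χ(f^{(σ)}) = η`. -/
theorem improved_policy_cycleTime_le
    (n : ℕ) (A : Fin n → Type) [∀ i, Fintype (A i)] [∀ i, Nonempty (A i)]
    (fa : ∀ i : Fin n, A i → (Fin n → ℝ) → ℝ)
    (hpoly : ∀ i a, IsPolyhedralFun (fa i a))
    (hop : ∀ i a, ∀ x y : Fin n → ℝ, x ≤ y → fa i a x ≤ fa i a y)
    (hah : ∀ i a (lam : ℝ) (x : Fin n → ℝ), fa i a (fun j => lam + x j) = lam + fa i a x)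
    (hconv : ∀ i a, ConvexOn ℝ Set.univ (fa i a))
    (σ σ' : ∀ i, A i)
    (fσ fσ' : (Fin n → ℝ) → (Fin n → ℝ))
    (hfσ : ∀ (w : Fin n → ℝ) (i : Fin n), fσ w i = fa i (σ i) w)
    (hfσ' : ∀ (w : Fin n → ℝ) (i : Fin n), fσ' w i = fa i (σ' i) w)
    (η v : Fin n → ℝ)
    -- `t ↦ tη + v` is an invariant half-line of `f^{(σ)}`
    (hinv : ∃ T : ℝ, ∀ t ≥ T,
      fσ (fun j => t * η j + v j) = fun i => (t + 1) * η i + v i)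
    -- `f^{(σ')}(tη + v) = f(tη + v)` for all sufficiently large `t`
    (hsel : ∃ T : ℝ, ∀ t ≥ T, ∀ i : Fin n,
      fσ' (fun j => t * η j + v j) i
        = ⨅ a : A i, fa i a (fun j => t * η j + v j)) :
    ∃ χ' : Fin n → ℝ,
      (∀ y : Fin n → ℝ,
        Tendsto (fun k : ℕ => fun i => fσ'^[k] y i / k) atTop (𝓝 χ')) ∧
      χ' ≤ η ∧
      (∀ y : Fin n → ℝ,
        Tendsto (fun k : ℕ => fun i => fσ^[k] y i / k) atTop (𝓝 η)) := by
  obtain rfl : fσ = fun w i ↦ fa i (σ i) w := funext₂ hfσ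
  obtain rfl : fσ' = fun w i ↦ fa i (σ' i) w := funext₂ hfσ'
  obtain ⟨χ', hχ', hle, hη⟩ := improved_policy_cycleTime_le_general
    (fun i a ↦ (hpoly i a).isAffineSelection) (fun i a x y ↦ hop i a x y) hah
    (eventually_atTop.2 hinv) (eventually_atTop.2 hsel)
  exact ⟨χ', hχ'.tendsto_div, hle, hη.tendsto_div⟩
end

section
/- Let ḡ, h̄ : ℝⁿ → ℝⁿ be polyhedral, convex, order-preserving and additively homogeneous maps; let w be a fixed point of ḡ and u a fixed point of h̄. Suppose that w_i = u_i and that the coordinate functions satisfy ḡ_i = h̄_i (as functions ℝⁿ → ℝ) for every critical node i of ḡ. Then every critical node of ḡ is a critical node of h̄. -/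
open Filter Topology

/-- The subdifferential of a (convex) self-map `g` of `ℝⁿ` at `u`: the set of matrices `M`
such that `g(x) − g(u) ≥ M(x − u)` componentwise for all `x`. -/
def Subdiff {n : ℕ} (g : (Fin n → ℝ) → (Fin n → ℝ)) (u : Fin n → ℝ) :
    Set (Matrix (Fin n) (Fin n) ℝ) :=
  {M | ∀ (x : Fin n → ℝ) (i : Fin n), g u i + M.mulVec (x - u) i ≤ g x i}

/-- `F` is a recurrence class of the matrix `M`: a (strongly connected, arc-closed)
strongly connected component of the digraph with an arc `(i,j)` whenever `M i j > 0`,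
such that every row of the `F×F` submatrix of `M` sums to `1`. -/
def IsRecClass {n : ℕ} (M : Matrix (Fin n) (Fin n) ℝ) (F : Finset (Fin n)) : Prop :=
  F.Nonempty ∧
  (∀ i ∈ F, ∀ j ∈ F, Relation.ReflTransGen (fun a b => 0 < M a b) i j) ∧
  (∀ i ∈ F, ∀ j, 0 < M i j → j ∈ F) ∧
  (∀ i ∈ F, ∑ j ∈ F, M i j = 1)

/-- `i` is a critical node of `g`: `i` belongs to a recurrence class of some matrix in the
subdifferential of `g` at some harmonic vector of `g` (this does not depend on the choice
of the harmonic vector). -/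
def IsCritical {n : ℕ} (g : (Fin n → ℝ) → (Fin n → ℝ)) (i : Fin n) : Prop :=
  ∃ u₀ : Fin n → ℝ, g u₀ = u₀ ∧
    ∃ M ∈ Subdiff g u₀, ∃ F : Finset (Fin n), IsRecClass M F ∧ i ∈ F


/-- `g : ℝⁿ → ℝⁿ` is polyhedral: there is a covering of `ℝⁿ` by finitely many convex
polyhedra (finite intersections of half-spaces) on each of which `g` is affine. -/
def IsPolyhedralMap {n : ℕ} (g : (Fin n → ℝ) → (Fin n → ℝ)) : Prop :=
  ∃ (m : ℕ) (C : Fin m → Set (Fin n → ℝ)),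
    (⋃ k, C k) = Set.univ ∧
    ∀ k : Fin m,
      (∃ (p : ℕ) (a : Fin p → Fin n → ℝ) (b : Fin p → ℝ),
        C k = {x | ∀ l, ∑ j, a l j * x j ≤ b l}) ∧
      ∃ (A : Matrix (Fin n) (Fin n) ℝ) (c : Fin n → ℝ),
        ∀ x ∈ C k, g x = fun i => (∑ j, A i j * x j) + c i

/-!
Let `F` be a recurrence class of `M ∈ ∂g(u₀)`, where `u₀` is harmonic for `g`. If `g(u) ≤ u` on `F`,
the subgradient inequality at `u` says that `u - u₀` is superharmonic on `F` for the stochastic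
matrix `M_FF`; irreducibility and the minimum principle force it to be constant there, so `M` fixes
it on `F`. Hence the rows of `M` indexed by `F` are still subgradients at `u`. When `u` is harmonic
for `h` and `g ≤ h` on the critical nodes of `g`, this applies to `u`, and the same rows are
subgradients of `h` at `u`. Completing them by arbitrary subgradients of the other coordinates of
`h` yields an element of `∂h(u)` with recurrence class `F`.
-/

section Subgradient

theorem exists_subgradient_of_convexOn {E : Type*} [AddCommGroup E] [Module ℝ E]
    [TopologicalSpace E] [IsTopologicalAddGroup E] [ContinuousSMul ℝ E] {s : Set E} {f : E → ℝ}
    {u : E} (hf : ConvexOn ℝ s f) (hs : IsOpen s) (hfc : ContinuousOn f s) (hu : u ∈ s) :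
    ∃ φ : E →L[ℝ] ℝ, ∀ x ∈ s, f u + φ (x - u) ≤ f x := by
  have isOpen_epigraph : IsOpen {p : E × ℝ | p.1 ∈ s ∧ f p.1 < p.2} := by
    have hcont : ContinuousOn (fun p : E × ℝ => p.2 - f p.1) (Prod.fst ⁻¹' s) :=
      continuousOn_snd.sub (hfc.comp continuousOn_fst fun _ hp => hp)
    convert hcont.isOpen_inter_preimage (hs.preimage continuous_fst) (isOpen_Ioi (a := 0)) using 1
    ext p
    simp only [Set.mem_ofPred_eq, Set.mem_inter_iff, Set.mem_preimage, Set.mem_Ioi, sub_pos]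
  obtain ⟨L, hL⟩ := geometric_hahn_banach_point_open (x := (u, f u))
    hf.convex_strict_epigraph isOpen_epigraph fun h => h.2.false
  set ψ : E →L[ℝ] ℝ := L.comp (.inl ℝ E ℝ)
  set a : ℝ := L (0, 1)
  have hL_apply (x : E) (t : ℝ) : L (x, t) = ψ x + t * a := by
    rw [← smul_eq_mul, ← map_smul, ContinuousLinearMap.comp_apply, ← map_add]
    simp
  have hsep {x : E} (hx : x ∈ s) {t : ℝ} (ht : f x < t) : ψ u + f u * a < ψ x + t * a := by
    simpa only [hL_apply] using hL (x, t) ⟨hx, ht⟩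
  have ha : 0 < a := by linarith [hsep hu (lt_add_one (f u))]
  refine ⟨-a⁻¹ • ψ, fun x hx => le_of_forall_gt_imp_ge_of_dense fun t ht => ?_⟩
  have hdiff : ψ u - ψ x ≤ (t - f u) * a := by linarith [hsep hx ht]
  calc
    f u + (-a⁻¹ • ψ) (x - u) = f u + (ψ u - ψ x) / a := by
      simp only [smul_apply, map_sub, smul_eq_mul]
      ring
    _ ≤ f u + (t - f u) := by gcongr; exact (div_le_iff₀ ha).2 hdiff
    _ = t := add_sub_cancel _ _

variable {n : ℕ} {g : (Fin n → ℝ) → (Fin n → ℝ)} {u : Fin n → ℝ}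
  {M N : Matrix (Fin n) (Fin n) ℝ}

theorem Subdiff.nonempty_of_convexOn (hg : ∀ i, ConvexOn ℝ Set.univ fun x => g x i)
    (u : Fin n → ℝ) : (Subdiff g u).Nonempty := by
  choose φ hφ using fun i => exists_subgradient_of_convexOn (hg i) isOpen_univ
    (hg i).locallyLipschitz.continuous.continuousOn (Set.mem_univ u)
  refine ⟨LinearMap.toMatrix' (LinearMap.pi fun i => (φ i).toLinearMap), fun x i => ?_⟩
  rw [LinearMap.toMatrix'_mulVec]
  exact hφ i x (Set.mem_univ x)

theorem Subdiff.nonneg_of_monotone (hg : Monotone g) (hM : M ∈ Subdiff g u) (i j : Fin n) :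
    0 ≤ M i j := by
  have hsub : g u i + -M i j ≤ g (u - Pi.single j 1) i := by
    have hM_apply := hM (u - Pi.single j 1) i
    rwa [sub_sub_cancel_left, Matrix.mulVec_neg, Matrix.mulVec_single_one] at hM_apply
  have hmono : g (u - Pi.single j 1) i ≤ g u i := hg (by simp) i
  linarith

theorem Subdiff.piecewise_mem {F : Finset (Fin n)}
    (hM : ∀ i ∈ F, ∀ x, g u i + M.mulVec (x - u) i ≤ g x i) (hN : N ∈ Subdiff g u) :
    Matrix.of (F.piecewise M N) ∈ Subdiff g u := by
  intro x i
  by_cases hi : i ∈ F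
  · have hrow : (Matrix.of (F.piecewise M N)).mulVec (x - u) i = M.mulVec (x - u) i :=
      congrArg (dotProduct · (x - u)) (F.piecewise_eq_of_mem M N hi)
    exact hrow ▸ hM i hi x
  · have hrow : (Matrix.of (F.piecewise M N)).mulVec (x - u) i = N.mulVec (x - u) i :=
      congrArg (dotProduct · (x - u)) (F.piecewise_eq_of_notMem M N hi)
    exact hrow ▸ hN x i

end Subgradient

theorem eq_of_sum_mul_le_of_forall_le {ι R : Type*} [Ring R] [LinearOrder R]
    [IsStrictOrderedRing R] {s : Finset ι} {p d : ι → R} {m : R} (hp : ∀ j ∈ s, 0 ≤ p j)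
    (hp_sum : ∑ j ∈ s, p j = 1) (hm : ∀ j ∈ s, m ≤ d j) (hle : ∑ j ∈ s, p j * d j ≤ m)
    {j : ι} (hj : j ∈ s) (hpj : 0 < p j) : d j = m := by
  have hterm : ∀ k ∈ s, 0 ≤ p k * (d k - m) := fun k hk =>
    mul_nonneg (hp k hk) (sub_nonneg.2 (hm k hk))
  have hsum : ∑ k ∈ s, p k * (d k - m) ≤ 0 := by
    simpa only [mul_sub, Finset.sum_sub_distrib, ← Finset.sum_mul, hp_sum, one_mul, sub_nonpos]
      using hle
  have hzero : p j * (d j - m) = 0 :=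
    (Finset.sum_eq_zero_iff_of_nonneg hterm).1 (hsum.antisymm (Finset.sum_nonneg hterm)) j hj
  exact sub_eq_zero.1 ((mul_eq_zero.1 hzero).resolve_left hpj.ne')

namespace IsRecClass

variable {n : ℕ} {M N : Matrix (Fin n) (Fin n) ℝ} {F : Finset (Fin n)}

theorem congr (hF : IsRecClass M F) (hMN : ∀ i ∈ F, M i = N i) : IsRecClass N F := by
  obtain ⟨hne, hconn, hclosed, hsum⟩ := hF
  refine ⟨hne, fun i hi j hj => ?_, fun i hi => hMN i hi ▸ hclosed i hi,
    fun i hi => hMN i hi ▸ hsum i hi⟩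
  induction hconn i hi j hj using Relation.ReflTransGen.head_induction_on with
  | refl => exact .refl
  | head hab _ ih => exact .head (hMN _ hi ▸ hab) (ih (hclosed _ hi _ hab))

theorem mulVec_apply (hF : IsRecClass M F) (hM : ∀ i j, 0 ≤ M i j) {i : Fin n} (hi : i ∈ F)
    (v : Fin n → ℝ) : M.mulVec v i = ∑ j ∈ F, M i j * v j := by
  refine (Finset.sum_subset F.subset_univ fun j _ hj => ?_).symm
  change M i j * v j = 0
  have hzero : M i j = 0 := ((hM i j).eq_or_lt.resolve_right (mt (hF.2.2.1 i hi j) hj)).symm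
  rw [hzero, zero_mul]

theorem exists_eq_const_of_mulVec_le (hF : IsRecClass M F) (hM : ∀ i j, 0 ≤ M i j)
    {d : Fin n → ℝ} (hd : ∀ i ∈ F, M.mulVec d i ≤ d i) : ∃ c, ∀ i ∈ F, d i = c := by
  obtain ⟨i₀, hi₀, hmin⟩ := F.exists_min_image d hF.1
  refine ⟨d i₀, fun i hi => ?_⟩
  suffices i ∈ F ∧ d i = d i₀ from this.2
  have hpath := hF.2.1 i₀ hi₀ i hi
  clear hi
  induction hpath with
  | refl => exact ⟨hi₀, rfl⟩
  | @tail a b _ hab ih =>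
    obtain ⟨ha, hda⟩ := ih
    have hb : b ∈ F := hF.2.2.1 a ha b hab
    have hle : ∑ j ∈ F, M a j * d j ≤ d i₀ := hF.mulVec_apply hM ha d ▸ hda ▸ hd a ha
    exact ⟨hb, eq_of_sum_mul_le_of_forall_le (fun j _ => hM a j) (hF.2.2.2 a ha) hmin hle hb hab⟩

theorem mulVec_eq_of_mulVec_le (hF : IsRecClass M F) (hM : ∀ i j, 0 ≤ M i j)
    {d : Fin n → ℝ} (hd : ∀ i ∈ F, M.mulVec d i ≤ d i) {i : Fin n} (hi : i ∈ F) :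
    M.mulVec d i = d i := by
  obtain ⟨c, hc⟩ := hF.exists_eq_const_of_mulVec_le hM hd
  calc
    M.mulVec d i = ∑ j ∈ F, M i j * c := by
      rw [hF.mulVec_apply hM hi]
      exact Finset.sum_congr rfl fun j hj => by rw [hc j hj]
    _ = d i := by rw [← Finset.sum_mul, hF.2.2.2 i hi, one_mul, hc i hi]

theorem add_mulVec_sub_le (hF : IsRecClass M F) {g : (Fin n → ℝ) → (Fin n → ℝ)}
    (hg : Monotone g) {u₀ u : Fin n → ℝ} (hM : M ∈ Subdiff g u₀)
    (hu₀ : ∀ i ∈ F, u₀ i ≤ g u₀ i) (hu : ∀ i ∈ F, g u i ≤ u i)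
    {i : Fin n} (hi : i ∈ F) (x : Fin n → ℝ) : u i + M.mulVec (x - u) i ≤ g x i := by
  have superharmonic : ∀ j ∈ F, M.mulVec (u - u₀) j ≤ (u - u₀) j := fun j hj => by
    rw [Pi.sub_apply]
    linarith [hM u j, hu₀ j hj, hu j hj]
  have harmonic : M.mulVec (u - u₀) i = u i - u₀ i :=
    hF.mulVec_eq_of_mulVec_le (Subdiff.nonneg_of_monotone hg hM) superharmonic hi
  calc
    u i + M.mulVec (x - u) i = u₀ i + M.mulVec (x - u₀) i := by
      rw [← sub_sub_sub_cancel_right x u u₀, Matrix.mulVec_sub, Pi.sub_apply, harmonic]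
      ring
    _ ≤ g u₀ i + M.mulVec (x - u₀) i := by gcongr; exact hu₀ i hi
    _ ≤ g x i := hM x i

end IsRecClass

theorem critical_nodes_decrease_general {n : ℕ} {g h : (Fin n → ℝ) → (Fin n → ℝ)}
    (hg : Monotone g) (hh : ∀ i, ConvexOn ℝ Set.univ fun x => h x i) {u : Fin n → ℝ}
    (hu : h u = u) (hgh : ∀ i, IsCritical g i → ∀ x, g x i ≤ h x i) {i : Fin n}
    (hi : IsCritical g i) : IsCritical h i := by
  obtain ⟨u₀, hu₀, M, hM, F, hF, hiF⟩ := hi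
  have g_le_h : ∀ k ∈ F, ∀ x, g x k ≤ h x k := fun k hk =>
    hgh k ⟨u₀, hu₀, M, hM, F, hF, hk⟩
  have superharmonic : ∀ k ∈ F, g u k ≤ u k := fun k hk =>
    (g_le_h k hk u).trans_eq (congrFun hu k)
  have subgradient : ∀ k ∈ F, ∀ x, h u k + M.mulVec (x - u) k ≤ h x k := fun k hk x => by
    rw [hu]
    exact (hF.add_mulVec_sub_le hg hM (fun j _ => (congrFun hu₀ j).ge) superharmonic hk x).trans
      (g_le_h k hk x)
  obtain ⟨N, hN⟩ := Subdiff.nonempty_of_convexOn hh u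
  exact ⟨u, hu, Matrix.of (F.piecewise M N), Subdiff.piecewise_mem subgradient hN, F,
    hF.congr fun k hk => (F.piecewise_eq_of_mem M N hk).symm, hiF⟩

/-- Let `ḡ, h̄ : ℝⁿ → ℝⁿ` be polyhedral, convex, order-preserving and
additively homogeneous, let `w` be a fixed point of `ḡ` and `u` a fixed point of `h̄`.
If `wᵢ = uᵢ` and `ḡᵢ = h̄ᵢ` (as functions) for every critical node `i` of `ḡ`, then every
critical node of `ḡ` is a critical node of `h̄`. -/
theorem critical_nodes_decrease
    (n : ℕ) (gbar hbar : (Fin n → ℝ) → (Fin n → ℝ))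
    (hgpoly : IsPolyhedralMap gbar) (hhpoly : IsPolyhedralMap hbar)
    (hgconv : ∀ i, ConvexOn ℝ Set.univ (fun x => gbar x i))
    (hhconv : ∀ i, ConvexOn ℝ Set.univ (fun x => hbar x i))
    (hgop : ∀ x y : Fin n → ℝ, x ≤ y → gbar x ≤ gbar y)
    (hhop : ∀ x y : Fin n → ℝ, x ≤ y → hbar x ≤ hbar y)
    (hgah : ∀ (lam : ℝ) (x : Fin n → ℝ),
      gbar (fun i => lam + x i) = fun i => lam + gbar x i)
    (hhah : ∀ (lam : ℝ) (x : Fin n → ℝ),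
      hbar (fun i => lam + x i) = fun i => lam + hbar x i)
    (w u : Fin n → ℝ) (hw : gbar w = w) (hu : hbar u = u)
    (hcoin : ∀ i : Fin n, IsCritical gbar i → w i = u i)
    (hcoord : ∀ i : Fin n, IsCritical gbar i → ∀ x : Fin n → ℝ, gbar x i = hbar x i) :
    ∀ i : Fin n, IsCritical gbar i → IsCritical hbar i :=
  fun _ => critical_nodes_decrease_general (fun _ _ => hgop _ _) hhconv hu
    fun i hi x => (hcoord i hi x).le
end

section
/- Let P be an n×n stochastic matrix, r ∈ ℝⁿ, and S ⊆ {1,…,n} a set containing exactly one index from each final class of P. Then there exists a unique pair (η, v) ∈ ℝⁿ × ℝⁿ such that η_i = (Pη)_i for all i ∉ S, η_i + v_i = (Pv)_i + r_i for all i ∈ {1,…,n}, and v_i = 0 for all i ∈ S. Moreover this η satisfies η = Pη. -/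
open Filter Topology

/-- An `n×n` real matrix is (row-)stochastic if it has nonnegative entries and every row
sums to `1`. -/
def IsStochastic {n : ℕ} (P : Matrix (Fin n) (Fin n) ℝ) : Prop :=
  (∀ i j, 0 ≤ P i j) ∧ ∀ i, ∑ j, P i j = 1

/-- `F` is a final class of `P`: a strongly connected component of the digraph on
`{1,…,n}` with an arc `(i,j)` whenever `P i j > 0`, such that no arc leaves `F`. -/
def IsFinalClass {n : ℕ} (P : Matrix (Fin n) (Fin n) ℝ) (F : Finset (Fin n)) : Prop :=
  F.Nonempty ∧
  (∀ i ∈ F, ∀ j ∈ F, Relation.ReflTransGen (fun a b => 0 < P a b) i j) ∧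
  (∀ i ∈ F, ∀ j, 0 < P i j → j ∈ F)

/-!
Every index reaches `S`, and distinct points of `S` do not reach each other. By the maximum
principle, a function that is harmonic off `S` and takes a single value on the points of `S`
reachable from an index takes that value at the index. Hence `η` is constant on the set of indices
reachable from a given point of `S`, which makes it harmonic on `S` as well.

If `r = 0`, then `η` is a constant `c` on the class of `s ∈ S` and `c + v = P v` there; evaluating
at a maximum and at a minimum of `v` gives `c = 0`. The maximum principle then yields `η = 0`, after
which `v` is itself harmonic and vanishes on `S`, so `v = 0`. The system is square, so injectivity
gives existence as well as uniqueness.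
-/

open Relation Matrix

section Reachability

variable {ι R : Type*}

/-- Reachability in the digraph of `P`: there is a path, possibly of length zero, from `i` to `j`
along arcs carrying a positive entry. -/
abbrev Reaches [Zero R] [LT R] (P : Matrix ι ι R) : ι → ι → Prop :=
  ReflTransGen fun i j => 0 < P i j

/-- `S` is a kernel of the reachability relation of `P`: an absorbing set whose points do not reach
one another. For finitely many indices these are the systems of representatives of the final
classes, and this form of the condition does not mention the classes. -/
structure IsReachabilityKernel [Zero R] [LT R] (P : Matrix ι ι R) (S : Set ι) : Prop where
  exists_reaches : ∀ i, ∃ s ∈ S, Reaches P i s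
  eq_of_reaches : ∀ s ∈ S, ∀ t ∈ S, Reaches P s t → s = t

theorem exists_reflTransGen_recurrent [Finite ι] (r : ι → ι → Prop) (i : ι) :
    ∃ m, ReflTransGen r i m ∧ ∀ j, ReflTransGen r m j → ReflTransGen r j m := by
  let reachability : Preorder ι :=
    { le := ReflTransGen r, le_refl := fun _ => .refl, le_trans := fun _ _ _ => .trans }
  obtain ⟨m, him, hm⟩ := Finite.exists_le_maximal (p := fun _ : ι => True) (a := i) trivial
  exact ⟨m, him, fun j hmj => hm.le_of_ge trivial hmj⟩

theorem exists_reaches_forall_reaches_le [Finite ι] {α : Type*} [LinearOrder α] [Zero R] [LT R]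
    (P : Matrix ι ι R) (f : ι → α) (i : ι) :
    ∃ m, Reaches P i m ∧ ∀ j, Reaches P i j → f j ≤ f m :=
  Set.exists_max_image {j | Reaches P i j} f (Set.toFinite _) ⟨i, .refl⟩

end Reachability

section FinalClass

variable {n : ℕ} {P : Matrix (Fin n) (Fin n) ℝ}

theorem mem_rowStochastic_of_isStochastic (hP : IsStochastic P) : P ∈ rowStochastic ℝ (Fin n) :=
  mem_rowStochastic_iff_sum.2 hP

theorem IsFinalClass.mem_of_reaches {F : Finset (Fin n)} (hF : IsFinalClass P F) {i j : Fin n}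
    (hi : i ∈ F) (hij : Reaches P i j) : j ∈ F := by
  induction hij with
  | refl => exact hi
  | tail _ hab ha => exact hF.2.2 _ ha _ hab

theorem exists_isFinalClass_reaches (P : Matrix (Fin n) (Fin n) ℝ) (i : Fin n) :
    ∃ F, IsFinalClass P F ∧ ∀ j ∈ F, Reaches P i j := by
  classical
  obtain ⟨m, him, hm⟩ := exists_reflTransGen_recurrent (fun a b => 0 < P a b) i
  refine ⟨({j | Reaches P m j} : Finset (Fin n)), ⟨⟨m, ?_⟩, ?_, ?_⟩, ?_⟩ <;>
    simp only [Finset.mem_filter_univ]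
  · exact .refl
  · exact fun a ha b hb => (hm a ha).trans hb
  · exact fun a ha b hab => ha.tail hab
  · exact fun j hj => him.trans hj

theorem isReachabilityKernel_of_isFinalClass {S : Finset (Fin n)}
    (hS1 : ∀ i ∈ S, ∃ F : Finset (Fin n), IsFinalClass P F ∧ i ∈ F)
    (hS2 : ∀ F : Finset (Fin n), IsFinalClass P F → ∃! i : Fin n, i ∈ S ∧ i ∈ F) :
    IsReachabilityKernel P (S : Set (Fin n)) where
  exists_reaches i := by
    obtain ⟨F, hF, hiF⟩ := exists_isFinalClass_reaches P i
    obtain ⟨s, hsS, hsF⟩ := (hS2 F hF).exists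
    exact ⟨s, hsS, hiF s hsF⟩
  eq_of_reaches s hs t ht hst := by
    obtain ⟨F, hF, hsF⟩ := hS1 s hs
    exact (hS2 F hF).unique ⟨hs, hsF⟩ ⟨ht, hF.mem_of_reaches hsF hst⟩

end FinalClass

section MaximumPrinciple

variable {ι R : Type*} [Fintype ι] [DecidableEq ι] [Ring R] [LinearOrder R] [IsStrictOrderedRing R]
  {P : Matrix ι ι R} {f : ι → R} {i : ι} {c : R}

theorem sub_mulVec_apply_of_mem_rowStochastic (hP : P ∈ rowStochastic R ι) (f : ι → R) (i : ι)
    (c : R) : c - (P *ᵥ f) i = ∑ j, P i j * (c - f j) := by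
  simp only [mul_sub, Finset.sum_sub_distrib, ← Finset.sum_mul, sum_row_of_mem_rowStochastic hP,
    one_mul, mulVec, dotProduct]

theorem mul_sub_nonneg_of_mem_rowStochastic (hP : P ∈ rowStochastic R ι)
    (hle : ∀ j, 0 < P i j → f j ≤ c) (j : ι) : 0 ≤ P i j * (c - f j) := by
  rcases (nonneg_of_mem_rowStochastic hP : 0 ≤ P i j).eq_or_lt with hij | hij
  · rw [← hij, zero_mul]
  · exact mul_nonneg hij.le (sub_nonneg.2 (hle j hij))

theorem mulVec_apply_le_of_mem_rowStochastic (hP : P ∈ rowStochastic R ι)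
    (hle : ∀ j, 0 < P i j → f j ≤ c) : (P *ᵥ f) i ≤ c := by
  rw [← sub_nonneg, sub_mulVec_apply_of_mem_rowStochastic hP]
  exact Finset.sum_nonneg fun j _ => mul_sub_nonneg_of_mem_rowStochastic hP hle j

theorem mulVec_apply_eq_of_mem_rowStochastic (hP : P ∈ rowStochastic R ι)
    (heq : ∀ j, 0 < P i j → f j = c) : (P *ᵥ f) i = c := by
  refine le_antisymm (mulVec_apply_le_of_mem_rowStochastic hP fun j hj => (heq j hj).le) ?_
  have h := mulVec_apply_le_of_mem_rowStochastic hP (f := -f) (c := -c) fun j hj => by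
    rw [Pi.neg_apply, heq j hj]
  rwa [mulVec_neg, Pi.neg_apply, neg_le_neg_iff] at h

theorem eq_of_le_mulVec_apply_of_mem_rowStochastic (hP : P ∈ rowStochastic R ι)
    (hle : ∀ j, 0 < P i j → f j ≤ c) (hc : c ≤ (P *ᵥ f) i) {j : ι} (hij : 0 < P i j) :
    f j = c := by
  have hnonneg := mul_sub_nonneg_of_mem_rowStochastic hP hle
  have hsum : ∑ k, P i k * (c - f k) = 0 := by
    refine le_antisymm ?_ (Finset.sum_nonneg fun k _ => hnonneg k)
    rwa [← sub_mulVec_apply_of_mem_rowStochastic hP, sub_nonpos]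
  have hterm : P i j * (c - f j) = 0 :=
    (Finset.sum_eq_zero_iff_of_nonneg fun k _ => hnonneg k).1 hsum j (Finset.mem_univ j)
  exact (sub_eq_zero.1 ((mul_eq_zero.1 hterm).resolve_left hij.ne')).symm

/-- A maximum exceeding `c` would not be attained on `S`, hence would propagate along arcs until a
path reaches `S` after all. -/
theorem le_of_le_mulVec_off (hP : P ∈ rowStochastic R ι) {S : Set ι}
    (hS : ∀ j, ∃ s ∈ S, Reaches P j s) (hf : ∀ j ∉ S, f j ≤ (P *ᵥ f) j)
    (hc : ∀ s ∈ S, Reaches P i s → f s ≤ c) : f i ≤ c := by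
  obtain ⟨m, him, hmax⟩ := exists_reaches_forall_reaches_le P f i
  refine (hmax i .refl).trans ?_
  by_contra! hcm
  have hspread : ∀ j, Reaches P m j → f j = f m := by
    intro j hmj
    induction hmj with
    | refl => rfl
    | @tail a b hma hab ha =>
      have hia : Reaches P i a := him.trans hma
      have haS : a ∉ S := fun haS => (hc a haS hia).not_gt (ha ▸ hcm)
      exact eq_of_le_mulVec_apply_of_mem_rowStochastic hP (fun k hk => hmax k (hia.tail hk))
        (ha ▸ hf a haS) hab
  obtain ⟨s, hs, hms⟩ := hS m
  exact (hc s hs (him.trans hms)).not_gt (hspread s hms ▸ hcm)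

theorem eq_of_eq_mulVec_off (hP : P ∈ rowStochastic R ι) {S : Set ι}
    (hS : ∀ j, ∃ s ∈ S, Reaches P j s) (hf : ∀ j ∉ S, f j = (P *ᵥ f) j)
    (hc : ∀ s ∈ S, Reaches P i s → f s = c) : f i = c := by
  refine le_antisymm (le_of_le_mulVec_off hP hS (fun j hj => (hf j hj).le)
    fun s hs his => (hc s hs his).le) (neg_le_neg_iff.1 ?_)
  refine le_of_le_mulVec_off (f := -f) hP hS (fun j hj => ?_) fun s hs his => ?_
  · rw [mulVec_neg, Pi.neg_apply, Pi.neg_apply, ← hf j hj]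
  · rw [Pi.neg_apply, hc s hs his]

theorem nonpos_of_add_le_mulVec (hP : P ∈ rowStochastic R ι)
    (h : ∀ j, Reaches P i j → c + f j ≤ (P *ᵥ f) j) : c ≤ 0 := by
  obtain ⟨m, him, hmax⟩ := exists_reaches_forall_reaches_le P f i
  exact add_le_iff_nonpos_left.1 <| (h m him).trans <|
    mulVec_apply_le_of_mem_rowStochastic hP fun j hj => hmax j (him.tail hj)

theorem eq_zero_of_add_eq_mulVec (hP : P ∈ rowStochastic R ι)
    (h : ∀ j, Reaches P i j → c + f j = (P *ᵥ f) j) : c = 0 := by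
  refine le_antisymm (nonpos_of_add_le_mulVec hP fun j hj => (h j hj).le) (neg_nonpos.1 ?_)
  refine nonpos_of_add_le_mulVec (f := -f) (i := i) hP fun j hj => ?_
  rw [mulVec_neg, Pi.neg_apply, Pi.neg_apply, ← h j hj, neg_add]

namespace IsReachabilityKernel

variable {S : Set ι}

theorem eq_of_reaches_of_eq_mulVec_off (hS : IsReachabilityKernel P S)
    (hP : P ∈ rowStochastic R ι) (hf : ∀ j ∉ S, f j = (P *ᵥ f) j) {s : ι} (hs : s ∈ S)
    (hsi : Reaches P s i) : f i = f s :=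
  eq_of_eq_mulVec_off hP hS.exists_reaches hf fun t ht hit =>
    congrArg f (hS.eq_of_reaches s hs t ht (hsi.trans hit)).symm

theorem mulVec_eq_self_of_eq_mulVec_off (hS : IsReachabilityKernel P S)
    (hP : P ∈ rowStochastic R ι) (hf : ∀ j ∉ S, f j = (P *ᵥ f) j) : P *ᵥ f = f := by
  funext i
  by_cases hi : i ∈ S
  · exact mulVec_apply_eq_of_mem_rowStochastic hP fun j hij =>
      hS.eq_of_reaches_of_eq_mulVec_off hP hf hi (.single hij)
  · exact (hf i hi).symm

end IsReachabilityKernel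

end MaximumPrinciple

section EvaluationSystem

variable {ι R : Type*} [Fintype ι]

/-- `(η, v)` solves the multichain policy evaluation equations for the transition matrix `P`, the
reward `r` and the normalization `v = 0` on `S`; `η` is the gain and `v` the bias. -/
def IsEvaluationPair [Ring R] (P : Matrix ι ι R) (S : Set ι) (r η v : ι → R) : Prop :=
  (∀ i ∉ S, η i = (P *ᵥ η) i) ∧ (∀ i, η i + v i = (P *ᵥ v) i + r i) ∧ ∀ i ∈ S, v i = 0

open Classical in
/-- The left-hand side of the evaluation equations, as an endomorphism of the space of pairs
`(η, v)`: the harmonicity of `η` off `S` and the normalization of `v` on `S` share the first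
component, so that the system is visibly square. -/
noncomputable def evaluationMap [CommRing R] (P : Matrix ι ι R) (S : Set ι) :
    (ι → R) × (ι → R) →ₗ[R] (ι → R) × (ι → R) :=
  (LinearMap.pi fun i => LinearMap.proj i ∘ₗ
    if i ∈ S then LinearMap.snd R _ _ else (1 - P.mulVecLin) ∘ₗ LinearMap.fst R _ _).prod
  (LinearMap.fst R _ _ + (1 - P.mulVecLin) ∘ₗ LinearMap.snd R _ _)

theorem evaluationMap_eq_iff [CommRing R] (P : Matrix ι ι R) (S : Set ι) (r η v : ι → R) :
    evaluationMap P S (η, v) = (0, r) ↔ IsEvaluationPair P S r η v := by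
  have hfst : (∀ i, (evaluationMap P S (η, v)).1 i = 0) ↔
      (∀ i ∉ S, η i = (P *ᵥ η) i) ∧ ∀ i ∈ S, v i = 0 := by
    rw [← forall_and]
    refine forall_congr' fun i => ?_
    by_cases hi : i ∈ S <;> simp [evaluationMap, hi, sub_eq_zero]
  have hsnd : (∀ i, (evaluationMap P S (η, v)).2 i = r i) ↔
      ∀ i, η i + v i = (P *ᵥ v) i + r i := by
    refine forall_congr' fun i => ?_
    simp [evaluationMap, ← add_sub_assoc, sub_eq_iff_eq_add']
  rw [Prod.ext_iff, funext_iff, funext_iff]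
  exact (and_congr hfst hsnd).trans (and_right_comm.trans and_assoc)

theorem IsEvaluationPair.eq_zero [DecidableEq ι] [Ring R] [LinearOrder R] [IsStrictOrderedRing R]
    {P : Matrix ι ι R} {S : Set ι} {η v : ι → R} (h : IsEvaluationPair P S 0 η v)
    (hP : P ∈ rowStochastic R ι) (hS : IsReachabilityKernel P S) : η = 0 ∧ v = 0 := by
  obtain ⟨hη, hηv, hv⟩ := h
  simp only [Pi.zero_apply, add_zero] at hηv
  have hηS : ∀ s ∈ S, η s = 0 := fun s hs =>
    eq_zero_of_add_eq_mulVec hP fun j hsj => by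
      rw [← hS.eq_of_reaches_of_eq_mulVec_off hP hη hs hsj, hηv]
  have hη0 : η = 0 := funext fun _ =>
    eq_of_eq_mulVec_off hP hS.exists_reaches hη fun s hs _ => hηS s hs
  have hvP : ∀ i, v i = (P *ᵥ v) i := by simpa [hη0] using hηv
  exact ⟨hη0, funext fun _ =>
    eq_of_eq_mulVec_off hP hS.exists_reaches (fun i _ => hvP i) fun s hs _ => hv s hs⟩

variable [DecidableEq ι] [LinearOrder R] {P : Matrix ι ι R} {S : Set ι}

theorem evaluationMap_injective [CommRing R] [IsStrictOrderedRing R] (hP : P ∈ rowStochastic R ι)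
    (hS : IsReachabilityKernel P S) : Function.Injective (evaluationMap P S) := by
  refine (injective_iff_map_eq_zero _).2 fun ⟨η, v⟩ h => ?_
  exact Prod.ext_iff.2 (((evaluationMap_eq_iff P S 0 η v).1 h).eq_zero hP hS)

theorem multichain_evaluation_system_unique_general [Field R] [IsStrictOrderedRing R]
    (hP : P ∈ rowStochastic R ι) (hS : IsReachabilityKernel P S) (r : ι → R) :
    ∃ η v : ι → R, IsEvaluationPair P S r η v ∧
      (∀ η' v' : ι → R, IsEvaluationPair P S r η' v' → η' = η ∧ v' = v) ∧ P *ᵥ η = η := by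
  have hinj := evaluationMap_injective hP hS
  obtain ⟨⟨η, v⟩, hηv⟩ := LinearMap.injective_iff_surjective.1 hinj (0, r)
  have hpair : IsEvaluationPair P S r η v := (evaluationMap_eq_iff P S r η v).1 hηv
  refine ⟨η, v, hpair, fun η' v' hpair' => ?_, hS.mulVec_eq_self_of_eq_mulVec_off hP hpair.1⟩
  exact Prod.ext_iff.1 (hinj (((evaluationMap_eq_iff P S r η' v').2 hpair').trans hηv.symm))

end EvaluationSystem

/-- Let `P` be an `n×n` stochastic matrix, `r ∈ ℝⁿ`, and `S` a set
containing exactly one index from each final class of `P` (and nothing else).  Then there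
is a unique pair `(η, v)` with `η_i = (Pη)_i` for `i ∉ S`, `η + v = Pv + r`, and `v_i = 0`
for `i ∈ S`; moreover this `η` satisfies `η = Pη`. -/
theorem multichain_evaluation_system_unique
    (n : ℕ) (P : Matrix (Fin n) (Fin n) ℝ) (hP : IsStochastic P)
    (r : Fin n → ℝ) (S : Finset (Fin n))
    (hS1 : ∀ i ∈ S, ∃ F : Finset (Fin n), IsFinalClass P F ∧ i ∈ F)
    (hS2 : ∀ F : Finset (Fin n), IsFinalClass P F → ∃! i : Fin n, i ∈ S ∧ i ∈ F) :
    ∃ η v : Fin n → ℝ,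
      ((∀ i ∉ S, η i = P.mulVec η i) ∧
       (∀ i : Fin n, η i + v i = P.mulVec v i + r i) ∧
       (∀ i ∈ S, v i = 0)) ∧
      (∀ η' v' : Fin n → ℝ,
        ((∀ i ∉ S, η' i = P.mulVec η' i) ∧
         (∀ i : Fin n, η' i + v' i = P.mulVec v' i + r i) ∧
         (∀ i ∈ S, v' i = 0)) → η' = η ∧ v' = v) ∧
      P.mulVec η = η :=
  multichain_evaluation_system_unique_general (mem_rowStochastic_of_isStochastic hP)
    (isReachabilityKernel_of_isFinalClass hS1 hS2) r
end

section
/- Let P be an n×n stochastic matrix. Then the kernel of I − P (as a linear endomorphism of ℝⁿ, where I is the identity matrix) has dimension equal to the number of final classes of P; moreover, every w ∈ ker(I − P) that vanishes at (at least) one index in each final class of P is identically zero. -/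
open Filter Topology

/-!
A vector fixed by `P` obeys a maximum principle: the set where it is maximal is closed under
outgoing arcs, so it contains a final class.  Hence a fixed vector is determined by one value on
each final class.  Conversely, prescribing the values of a vector on the union of the final classes
and asking it to be harmonic elsewhere is a square linear system; by the maximum principle it is
injective, hence solvable.  If the prescribed values are constant on each final class, the solution
is also harmonic there.  Thus evaluation at one representative of each class identifies the kernel
with the functions on the set of final classes.
-/

/-- `F` is a final component of the relation `r`: a nonempty set of mutually reachable points that
no arc leaves.  For `r i j := 0 < P i j` this is a final class of the matrix `P`.  Mutual
reachability is along `r`-paths in the whole type, which cannot leave `F` anyway. -/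
structure IsFinalComponent {α : Type*} (r : α → α → Prop) (F : Finset α) : Prop where
  nonempty : F.Nonempty
  reachable : ∀ i ∈ F, ∀ j ∈ F, Relation.ReflTransGen r i j
  closed : ∀ i ∈ F, ∀ j, r i j → j ∈ F

namespace IsFinalComponent

variable {α : Type*} {r : α → α → Prop} {F G S : Finset α} {i j : α}

theorem mem_of_reachable (hF : IsFinalComponent r F) (hi : i ∈ F)
    (hij : Relation.ReflTransGen r i j) : j ∈ F := by
  induction hij with
  | refl => exact hi
  | tail _ hab ha => exact hF.closed _ ha _ hab

theorem subset_of_mem (hF : IsFinalComponent r F) (hG : IsFinalComponent r G) (hiF : i ∈ F)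
    (hiG : i ∈ G) : F ⊆ G :=
  fun j hj => hG.mem_of_reachable hiG (hF.reachable i hiF j hj)

theorem eq_of_mem (hF : IsFinalComponent r F) (hG : IsFinalComponent r G) (hiF : i ∈ F)
    (hiG : i ∈ G) : F = G :=
  (hF.subset_of_mem hG hiF hiG).antisymm (hG.subset_of_mem hF hiG hiF)

theorem of_minimal
    (hF : Minimal (fun T : Finset α => T.Nonempty ∧ ∀ i ∈ T, ∀ j, r i j → j ∈ T) F) :
    IsFinalComponent r F where
  nonempty := hF.prop.1
  closed := hF.prop.2
  reachable i hi j hj := by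
    classical
    let T := F.filter (Relation.ReflTransGen r i)
    have hT : T.Nonempty ∧ ∀ a ∈ T, ∀ b, r a b → b ∈ T := by
      refine ⟨⟨i, Finset.mem_filter.2 ⟨hi, .refl⟩⟩, fun a ha b hab => ?_⟩
      obtain ⟨haF, hia⟩ := Finset.mem_filter.1 ha
      exact Finset.mem_filter.2 ⟨hF.prop.2 a haF b hab, hia.tail hab⟩
    exact (Finset.mem_filter.1 (hF.le_of_le hT (Finset.filter_subset _ _) hj)).2

theorem exists_subset_of_closed (hne : S.Nonempty) (hS : ∀ i ∈ S, ∀ j, r i j → j ∈ S) :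
    ∃ F ⊆ S, IsFinalComponent r F := by
  obtain ⟨F, hFS, hF⟩ := exists_minimal_le_of_wellFoundedLT
    (fun T : Finset α => T.Nonempty ∧ ∀ i ∈ T, ∀ j, r i j → j ∈ T) S ⟨hne, hS⟩
  exact ⟨F, hFS, .of_minimal hF⟩

end IsFinalComponent

open Matrix

section MaximumPrinciple

variable {ι R : Type*} [Fintype ι] [DecidableEq ι]

theorem mulVec_apply_eq_of_forall_eq [Semiring R] [PartialOrder R] [IsOrderedRing R]
    {P : Matrix ι ι R} (hP : P ∈ rowStochastic R ι) {w : ι → R} {i : ι} {c : R}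
    (hw : ∀ j, 0 < P i j → w j = c) : (P *ᵥ w) i = c := by
  have hterm : ∀ j, P i j * w j = P i j * c := fun j => by
    rcases (hP.1 i j).eq_or_lt with h0 | hpos
    · rw [← h0, zero_mul, zero_mul]
    · rw [hw j hpos]
  calc (P *ᵥ w) i = ∑ j, P i j * c := Finset.sum_congr rfl fun j _ => hterm j
    _ = c := by rw [← Finset.sum_mul, sum_row_of_mem_rowStochastic hP, one_mul]

theorem eq_of_forall_le_of_le_mulVec [Semiring R] [PartialOrder R] [IsStrictOrderedRing R]
    {P : Matrix ι ι R} (hP : P ∈ rowStochastic R ι) {w : ι → R} {i j : ι}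
    (hmax : ∀ k, w k ≤ w i) (hi : w i ≤ (P *ᵥ w) i) (hij : 0 < P i j) : w j = w i := by
  have hle : ∀ k ∈ Finset.univ, P i k * w k ≤ P i k * w i :=
    fun k _ => mul_le_mul_of_nonneg_left (hmax k) (hP.1 i k)
  have hsum : ∑ k, P i k * w k = ∑ k, P i k * w i := by
    refine (Finset.sum_le_sum hle).antisymm ?_
    rwa [← Finset.sum_mul, sum_row_of_mem_rowStochastic hP, one_mul]
  have hterm : P i j * w j = P i j * w i :=
    (Finset.sum_eq_sum_iff_of_le hle).1 hsum j (Finset.mem_univ j)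
  by_contra hne
  exact (mul_lt_mul_of_pos_left ((hmax j).lt_of_ne hne) hij).ne hterm

theorem exists_mem_le_of_le_mulVec [Semiring R] [LinearOrder R] [IsStrictOrderedRing R]
    {P : Matrix ι ι R} (hP : P ∈ rowStochastic R ι) {B : Set ι}
    (hB : ∀ F, IsFinalComponent (0 < P · ·) F → ∃ i ∈ F, i ∈ B) {w : ι → R}
    (hw : ∀ i ∉ B, w i ≤ (P *ᵥ w) i) (i : ι) : ∃ b ∈ B, w i ≤ w b := by
  have : Nonempty ι := ⟨i⟩
  obtain ⟨m, hm⟩ := Finite.exists_max w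
  by_contra! hlt
  let S := Finset.univ.filter (w · = w m)
  have mem_S {a : ι} : a ∈ S ↔ w a = w m := Finset.mem_filter_univ a
  have notMem_B {a : ι} (ha : a ∈ S) : a ∉ B := fun haB =>
    (hlt a haB).not_ge ((hm i).trans_eq (mem_S.1 ha).symm)
  have hS : ∀ a ∈ S, ∀ b, 0 < P a b → b ∈ S := fun a ha b hab => by
    have hmax : ∀ k, w k ≤ w a := fun k => (hm k).trans_eq (mem_S.1 ha).symm
    exact mem_S.2 <|
      (eq_of_forall_le_of_le_mulVec hP hmax (hw a (notMem_B ha)) hab).trans (mem_S.1 ha)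
  obtain ⟨F, hFS, hF⟩ := IsFinalComponent.exists_subset_of_closed ⟨m, mem_S.2 rfl⟩ hS
  obtain ⟨b, hbF, hbB⟩ := hB F hF
  exact notMem_B (hFS hbF) hbB

theorem eq_zero_of_mulVec_eq_of_eq_zero [Ring R] [LinearOrder R] [IsStrictOrderedRing R]
    {P : Matrix ι ι R} (hP : P ∈ rowStochastic R ι) {B : Set ι}
    (hB : ∀ F, IsFinalComponent (0 < P · ·) F → ∃ i ∈ F, i ∈ B) {w : ι → R}
    (hw : ∀ i ∉ B, (P *ᵥ w) i = w i) (hw0 : ∀ i ∈ B, w i = 0) : w = 0 := by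
  funext i
  apply le_antisymm
  · obtain ⟨b, hb, hle⟩ := exists_mem_le_of_le_mulVec hP hB (fun i hi => (hw i hi).ge) i
    exact hle.trans_eq (hw0 b hb)
  · have hneg : ∀ i ∉ B, (-w) i ≤ (P *ᵥ -w) i := fun i hi => by
      rw [mulVec_neg, Pi.neg_apply, Pi.neg_apply, hw i hi]
    obtain ⟨b, hb, hle⟩ := exists_mem_le_of_le_mulVec hP hB hneg i
    exact (hw0 b hb).symm.trans_le (neg_le_neg_iff.1 hle)

end MaximumPrinciple

section DirichletProblem

variable {ι : Type*} [Fintype ι] [DecidableEq ι]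

/-- The matrix of the Dirichlet problem for `P` with boundary `B`: its rows are those of the
identity on `B` and those of `1 - P` off `B`. -/
def dirichletMatrix {R : Type*} [Ring R] (P : Matrix ι ι R) (B : Set ι) [DecidablePred (· ∈ B)] :
    Matrix ι ι R :=
  of fun i => if i ∈ B then (1 : Matrix ι ι R) i else (1 - P) i

section Ring

variable {R : Type*} [Ring R] (P : Matrix ι ι R) {B : Set ι} [DecidablePred (· ∈ B)] (w : ι → R)
  {i : ι}

theorem dirichletMatrix_mulVec_of_mem (hi : i ∈ B) : (dirichletMatrix P B *ᵥ w) i = w i :=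
  calc (dirichletMatrix P B *ᵥ w) i = ((1 : Matrix ι ι R) *ᵥ w) i :=
        congrArg (· ⬝ᵥ w) (if_pos hi)
    _ = w i := by rw [one_mulVec]

theorem dirichletMatrix_mulVec_of_notMem (hi : i ∉ B) :
    (dirichletMatrix P B *ᵥ w) i = w i - (P *ᵥ w) i :=
  calc (dirichletMatrix P B *ᵥ w) i = ((1 - P) *ᵥ w) i :=
        congrArg (· ⬝ᵥ w) (if_neg hi)
    _ = w i - (P *ᵥ w) i := by rw [sub_mulVec, one_mulVec, Pi.sub_apply]

end Ring

variable {K : Type*} [Field K] [LinearOrder K] [IsStrictOrderedRing K] {P : Matrix ι ι K}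

theorem isUnit_dirichletMatrix (hP : P ∈ rowStochastic K ι) {B : Set ι} [DecidablePred (· ∈ B)]
    (hB : ∀ F, IsFinalComponent (0 < P · ·) F → ∃ i ∈ F, i ∈ B) :
    IsUnit (dirichletMatrix P B) := by
  refine mulVec_injective_iff_isUnit.1 <|
    (injective_iff_map_eq_zero (dirichletMatrix P B).mulVecLin).2 fun w hw => ?_
  refine eq_zero_of_mulVec_eq_of_eq_zero hP hB (fun i hi => ?_) fun i hi => ?_
  · exact (sub_eq_zero.1 <|
      (dirichletMatrix_mulVec_of_notMem P w hi).symm.trans (congrFun hw i)).symm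
  · exact (dirichletMatrix_mulVec_of_mem P w hi).symm.trans (congrFun hw i)

theorem exists_eqOn_and_mulVec_eq (hP : P ∈ rowStochastic K ι) {B : Set ι}
    (hB : ∀ F, IsFinalComponent (0 < P · ·) F → ∃ i ∈ F, i ∈ B) (g : ι → K) :
    ∃ w : ι → K, Set.EqOn w g B ∧ ∀ i ∉ B, (P *ᵥ w) i = w i := by
  classical
  obtain ⟨w, hw⟩ := mulVec_surjective_iff_isUnit.2 (isUnit_dirichletMatrix hP hB) (B.indicator g)
  refine ⟨w, fun i hi => ?_, fun i hi => ?_⟩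
  · rw [← dirichletMatrix_mulVec_of_mem P w hi, hw, Set.indicator_of_mem hi]
  · have hsub : w i - (P *ᵥ w) i = 0 := by
      rw [← dirichletMatrix_mulVec_of_notMem P w hi, hw, Set.indicator_of_notMem hi]
    exact (sub_eq_zero.1 hsub).symm

theorem exists_mulVec_eq_self_of_finalComponent_values (hP : P ∈ rowStochastic K ι)
    (g : {F : Finset ι // IsFinalComponent (0 < P · ·) F} → K) :
    ∃ w : ι → K, P *ᵥ w = w ∧ ∀ F, ∀ i ∈ F.1, w i = g F := by
  let point : (Σ F : {F : Finset ι // IsFinalComponent (0 < P · ·) F}, F.1) → ι := fun x => x.2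
  have point_injective : Function.Injective point := by
    rintro ⟨F, i, hiF⟩ ⟨G, j, hjG⟩ (rfl : i = j)
    exact Sigma.subtype_ext (Subtype.ext (F.2.eq_of_mem G.2 hiF hjG)) rfl
  obtain ⟨w, hwB, hw⟩ := exists_eqOn_and_mulVec_eq hP (B := Set.range point)
    (fun F hF => hF.nonempty.imp fun i hi => ⟨hi, ⟨⟨F, hF⟩, i, hi⟩, rfl⟩)
    (Function.extend point (fun x => g x.1) 0)
  have hwg : ∀ F, ∀ i ∈ F.1, w i = g F := fun F i hi =>
    (hwB ⟨⟨F, i, hi⟩, rfl⟩).trans (point_injective.extend_apply _ _ ⟨F, i, hi⟩)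
  refine ⟨w, funext fun i => ?_, hwg⟩
  by_cases hi : i ∈ Set.range point
  · obtain ⟨⟨F, i, hiF⟩, rfl⟩ := hi
    exact mulVec_apply_eq_of_forall_eq hP fun j hij =>
      (hwg F j (F.2.closed i hiF j hij)).trans (hwg F i hiF).symm
  · exact hw i hi

end DirichletProblem

section Kernel

variable {ι : Type*} [Fintype ι] [DecidableEq ι]

theorem one_sub_mulVec_eq_zero_iff {R : Type*} [Ring R] {P : Matrix ι ι R} {w : ι → R} :
    (1 - P) *ᵥ w = 0 ↔ P *ᵥ w = w := by
  rw [sub_mulVec, one_mulVec, sub_eq_zero, eq_comm]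

theorem eq_zero_of_one_sub_mulVec_eq_zero {R : Type*} [Ring R] [LinearOrder R]
    [IsStrictOrderedRing R] {P : Matrix ι ι R} (hP : P ∈ rowStochastic R ι) {w : ι → R}
    (hw : (1 - P) *ᵥ w = 0)
    (hw0 : ∀ F, IsFinalComponent (0 < P · ·) F → ∃ i ∈ F, w i = 0) : w = 0 :=
  eq_zero_of_mulVec_eq_of_eq_zero hP (B := {i | w i = 0}) hw0
    (fun i _ => congrFun (one_sub_mulVec_eq_zero_iff.1 hw) i) fun _ hi => hi

variable {K : Type*} [Field K] [LinearOrder K] [IsStrictOrderedRing K] {P : Matrix ι ι K}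

theorem bijective_funLeft_domRestrict_ker (hP : P ∈ rowStochastic K ι)
    {rep : {F : Finset ι // IsFinalComponent (0 < P · ·) F} → ι} (hrep : ∀ F, rep F ∈ F.1) :
    Function.Bijective
      ((LinearMap.funLeft K K rep).domRestrict (LinearMap.ker (1 - P).mulVecLin)) := by
  constructor
  · refine (injective_iff_map_eq_zero _).2 fun w hw => Subtype.ext ?_
    exact eq_zero_of_one_sub_mulVec_eq_zero hP w.2 fun F hF =>
      ⟨rep ⟨F, hF⟩, hrep ⟨F, hF⟩, congrFun hw ⟨F, hF⟩⟩
  · intro g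
    obtain ⟨w, hw, hwg⟩ := exists_mulVec_eq_self_of_finalComponent_values hP g
    exact ⟨⟨w, one_sub_mulVec_eq_zero_iff.2 hw⟩, funext fun F => hwg F (rep F) (hrep F)⟩

theorem finrank_ker_one_sub_mulVecLin (hP : P ∈ rowStochastic K ι) :
    Module.finrank K (LinearMap.ker (1 - P).mulVecLin)
      = Set.ncard {F : Finset ι | IsFinalComponent (0 < P · ·) F} := by
  classical
  choose rep hrep using fun F : {F : Finset ι // IsFinalComponent (0 < P · ·) F} => F.2.nonempty
  rw [(LinearEquiv.ofBijective _ (bijective_funLeft_domRestrict_ker hP hrep)).finrank_eq,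
    Module.finrank_fintype_fun_eq_card, ← Nat.card_eq_fintype_card]
  exact Nat.card_coe_set_eq _

theorem ker_one_sub_stochastic_general (hP : P ∈ rowStochastic K ι) :
    Module.finrank K (LinearMap.ker (1 - P).mulVecLin)
        = Set.ncard {F : Finset ι | IsFinalComponent (0 < P · ·) F} ∧
      ∀ w : ι → K, (1 - P) *ᵥ w = 0 →
        (∀ F, IsFinalComponent (0 < P · ·) F → ∃ i ∈ F, w i = 0) → w = 0 :=
  ⟨finrank_ker_one_sub_mulVecLin hP, fun _ => eq_zero_of_one_sub_mulVec_eq_zero hP⟩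

end Kernel

theorem isFinalClass_iff_isFinalComponent {n : ℕ} {P : Matrix (Fin n) (Fin n) ℝ}
    {F : Finset (Fin n)} : IsFinalClass P F ↔ IsFinalComponent (0 < P · ·) F :=
  ⟨fun ⟨hne, hreach, hclosed⟩ => ⟨hne, hreach, hclosed⟩,
    fun ⟨hne, hreach, hclosed⟩ => ⟨hne, hreach, hclosed⟩⟩

/-- Let `P` be an `n×n` stochastic matrix.  Then the kernel of `I − P`
has dimension equal to the number of final classes of `P`; moreover every
`w ∈ ker(I − P)` vanishing at (at least) one index in each final class is identically
zero. -/
theorem ker_one_sub_stochastic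
    (n : ℕ) (P : Matrix (Fin n) (Fin n) ℝ) (hP : IsStochastic P) :
    Module.finrank ℝ (LinearMap.ker (Matrix.mulVecLin (1 - P)))
        = Set.ncard {F : Finset (Fin n) | IsFinalClass P F} ∧
    ∀ w : Fin n → ℝ, (1 - P).mulVec w = 0 →
      (∀ F : Finset (Fin n), IsFinalClass P F → ∃ i ∈ F, w i = 0) → w = 0 := by
  simp only [isFinalClass_iff_isFinalComponent]
  exact ker_one_sub_stochastic_general (mem_rowStochastic_iff_sum.2 hP)
end

section
/- Let P be an n×n stochastic matrix and r ∈ ℝⁿ. Then there exists a unique vector η ∈ ℝⁿ such that Pη = η and η − r belongs to the range of I − P; moreover, for each final class F of P, letting π_F be the unique stationary probability vector of the (stochastic, irreducible) F×F submatrix P_{FF}, one has η_i = Σ_{j∈F} (π_F)_j r_j for every i ∈ F. -/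
open Filter Topology

/-!
Everything rests on the minimum principle: where `P w ≤ w`, a minimum of `w` propagates along the
arcs of `P`. If `P x = x` and `x = w - P w`, then the minimisers of `x` therefore form a closed
class, and at a maximiser of `w` on that class `w - P w ≥ 0`; so `min x ≥ 0`, and `x = 0` by
symmetry. Hence the kernel and the range of `I - P` meet trivially, so they are complementary, and
`η` is the component of `r` in the kernel. The minimum principle also makes `η` constant on each
final class, where a stationary vector annihilates `r - η`, a vector in the range of `I - P`.
-/

open Matrix

lemma mul_le_mul_of_pos_imp_le {R : Type*} [Semiring R] [PartialOrder R] [IsOrderedRing R]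
    {a b c : R} (ha : 0 ≤ a) (h : 0 < a → b ≤ c) : a * b ≤ a * c := by
  rcases ha.eq_or_lt with rfl | hpos
  · simp only [zero_mul, le_refl]
  · exact mul_le_mul_of_nonneg_left (h hpos) ha

lemma existsUnique_mem_and_sub_mem_of_isCompl {R M : Type*} [Ring R] [AddCommGroup M] [Module R M]
    {p q : Submodule R M} (h : IsCompl p q) (r : M) : ∃! η, η ∈ p ∧ η - r ∈ q := by
  obtain ⟨η, z, rfl, -⟩ := Submodule.existsUnique_add_of_isCompl h r
  refine ⟨η, ⟨η.2, by simp only [sub_add_cancel_left, neg_mem_iff, z.2]⟩, ?_⟩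
  rintro η' ⟨hη'p, hη'q⟩
  have hsub : η' - η ∈ q := by
    have heq : η' - η = η' - (η + z) + z := by abel
    exact heq ▸ add_mem hη'q z.2
  exact sub_eq_zero.mp (Submodule.disjoint_def.mp h.disjoint _ (sub_mem hη'p η.2) hsub)

section ClosedClass

variable {ι R : Type*}

/-- A set `F` of states is a closed class of the nonnegative matrix `P` if no arc `0 < P i j` leaves
it. Unlike a final class, it may be empty and need not be strongly connected. -/
def IsClosedClass [Zero R] [LT R] (P : Matrix ι ι R) (F : Set ι) : Prop :=
  ∀ i ∈ F, ∀ j, 0 < P i j → j ∈ F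

lemma IsClosedClass.mem_of_reflTransGen [Zero R] [LT R] {P : Matrix ι ι R} {F : Set ι}
    (hF : IsClosedClass P F) {i j : ι} (hi : i ∈ F)
    (hij : Relation.ReflTransGen (fun a b => 0 < P a b) i j) : j ∈ F := by
  induction hij with
  | refl => exact hi
  | tail _ hab ha => exact hF _ ha _ hab

lemma IsClosedClass.sum_mul_mulVec_eq [Fintype ι] [Semiring R] [PartialOrder R]
    {P : Matrix ι ι R} {F : Finset ι} (hF : IsClosedClass P (F : Set ι))
    (hP : ∀ i j, 0 ≤ P i j) {π : ι → R} (hπ : ∀ j ∈ F, ∑ i ∈ F, π i * P i j = π j) (w : ι → R) :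
    ∑ i ∈ F, π i * (P *ᵥ w) i = ∑ j ∈ F, π j * w j := by
  have hsupp : ∀ i ∈ F, (P *ᵥ w) i = ∑ j ∈ F, P i j * w j := fun i hi => by
    refine (Finset.sum_subset F.subset_univ fun j _ hj => ?_).symm
    have hzero : 0 = P i j := (hP i j).eq_of_not_lt fun hpos => hj (hF i hi j hpos)
    exact mul_eq_zero_of_left hzero.symm _
  calc ∑ i ∈ F, π i * (P *ᵥ w) i
      = ∑ i ∈ F, ∑ j ∈ F, π i * P i j * w j :=
        Finset.sum_congr rfl fun i hi => by simp only [hsupp i hi, Finset.mul_sum, mul_assoc]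
    _ = ∑ j ∈ F, (∑ i ∈ F, π i * P i j) * w j := by
        rw [Finset.sum_comm]
        simp only [Finset.sum_mul]
    _ = ∑ j ∈ F, π j * w j := Finset.sum_congr rfl fun j hj => by rw [hπ j hj]

end ClosedClass

section MinimumPrinciple

variable {ι R : Type*} [Fintype ι] [DecidableEq ι] [Ring R]

lemma mulVec_apply_le_of_forall_le [PartialOrder R] [IsOrderedRing R] {P : Matrix ι ι R}
    (hP : P ∈ rowStochastic R ι) {w : ι → R} {i : ι} {c : R} (hw : ∀ j, 0 < P i j → w j ≤ c) :
    (P *ᵥ w) i ≤ c :=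
  calc ∑ j, P i j * w j ≤ ∑ j, P i j * c :=
        Finset.sum_le_sum fun j _ => mul_le_mul_of_pos_imp_le (hP.1 i j) (hw j)
    _ = c := by rw [← Finset.sum_mul, sum_row_of_mem_rowStochastic hP, one_mul]

variable [LinearOrder R] [IsStrictOrderedRing R] {P : Matrix ι ι R}

lemma eq_of_mulVec_apply_le_of_forall_le (hP : P ∈ rowStochastic R ι) {w : ι → R} {i : ι} {c : R}
    (hw : ∀ j, 0 < P i j → c ≤ w j) (hc : (P *ᵥ w) i ≤ c) {j : ι} (hij : 0 < P i j) : w j = c := by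
  have hle : ∀ k ∈ Finset.univ, P i k * c ≤ P i k * w k :=
    fun k _ => mul_le_mul_of_pos_imp_le (hP.1 i k) (hw k)
  have hsum : ∑ k, P i k * c = c := by
    rw [← Finset.sum_mul, sum_row_of_mem_rowStochastic hP, one_mul]
  have heq : ∑ k, P i k * c = ∑ k, P i k * w k :=
    le_antisymm (Finset.sum_le_sum hle) (hc.trans_eq hsum.symm)
  have hj := (Finset.sum_eq_sum_iff_of_le hle).mp heq j (Finset.mem_univ j)
  exact (mul_left_cancel₀ hij.ne' hj).symm

lemma IsClosedClass.inter_setOf_eq_of_forall_le (hP : P ∈ rowStochastic R ι) {F : Set ι}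
    (hF : IsClosedClass P F) {w : ι → R} (hw : P *ᵥ w ≤ w) {c : R} (hc : ∀ i ∈ F, c ≤ w i) :
    IsClosedClass P (F ∩ {i | w i = c}) := by
  rintro i ⟨hi, hic⟩ j hij
  exact ⟨hF i hi j hij, eq_of_mulVec_apply_le_of_forall_le hP (fun k hik => hc k (hF i hi k hik))
    ((hw i).trans_eq hic) hij⟩

lemma IsClosedClass.apply_eq_apply_of_mulVec_le (hP : P ∈ rowStochastic R ι) {F : Set ι}
    (hF : IsClosedClass P F)
    (hconn : ∀ i ∈ F, ∀ j ∈ F, Relation.ReflTransGen (fun a b => 0 < P a b) i j)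
    {w : ι → R} (hw : P *ᵥ w ≤ w) {i j : ι} (hi : i ∈ F) (hj : j ∈ F) : w i = w j := by
  obtain ⟨m, hm, hmin⟩ := F.exists_min_image w F.toFinite ⟨i, hi⟩
  have hclosed := hF.inter_setOf_eq_of_forall_le hP hw hmin
  have heq : ∀ k ∈ F, w k = w m := fun k hk =>
    (hclosed.mem_of_reflTransGen ⟨hm, rfl⟩ (hconn m hm k hk)).2
  rw [heq i hi, heq j hj]

lemma nonneg_of_mulVec_le_of_sub_mulVec_le (hP : P ∈ rowStochastic R ι) {x w : ι → R}
    (hx : P *ᵥ x ≤ x) (hw : w - P *ᵥ w ≤ x) : 0 ≤ x := by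
  intro i
  obtain ⟨m, -, hmin⟩ := Finset.univ.exists_min_image x ⟨i, Finset.mem_univ i⟩
  have huniv : IsClosedClass P Set.univ := fun _ _ _ _ => Set.mem_univ _
  have hclosed : IsClosedClass P (Set.univ ∩ {k | x k = x m}) :=
    huniv.inter_setOf_eq_of_forall_le hP hx fun k _ => hmin k (Finset.mem_univ k)
  obtain ⟨k, hk, hmax⟩ :=
    Set.exists_max_image (Set.univ ∩ {k | x k = x m}) w (Set.toFinite _) ⟨m, Set.mem_univ m, rfl⟩
  calc 0 ≤ w k - (P *ᵥ w) k :=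
        sub_nonneg.mpr (mulVec_apply_le_of_forall_le hP fun j hkj => hmax j (hclosed k hk j hkj))
    _ ≤ x k := hw k
    _ = x m := hk.2
    _ ≤ x i := hmin i (Finset.mem_univ i)

lemma eq_zero_of_mulVec_eq_self_of_sub_mulVec_eq (hP : P ∈ rowStochastic R ι) {x w : ι → R}
    (hx : P *ᵥ x = x) (hw : w - P *ᵥ w = x) : x = 0 := by
  have hneg : 0 ≤ -x := nonneg_of_mulVec_le_of_sub_mulVec_le hP (w := -w)
    (by rw [mulVec_neg, hx]) (by rw [mulVec_neg, ← hw, neg_sub_neg, neg_sub])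
  exact le_antisymm (neg_nonneg.mp hneg) (nonneg_of_mulVec_le_of_sub_mulVec_le hP hx.le hw.le)

end MinimumPrinciple

section KerRange

variable {ι R : Type*} [Fintype ι] [DecidableEq ι]

lemma mulVecLin_one_sub_apply [CommRing R] (P : Matrix ι ι R) (w : ι → R) :
    (1 - P).mulVecLin w = w - P *ᵥ w := by
  rw [mulVecLin_apply, sub_mulVec, one_mulVec]

lemma mem_ker_mulVecLin_one_sub [CommRing R] {P : Matrix ι ι R} {w : ι → R} :
    w ∈ LinearMap.ker (1 - P).mulVecLin ↔ P *ᵥ w = w := by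
  rw [LinearMap.mem_ker, mulVecLin_one_sub_apply, sub_eq_zero, eq_comm]

lemma disjoint_ker_range_one_sub_of_mem_rowStochastic [CommRing R] [LinearOrder R]
    [IsStrictOrderedRing R] {P : Matrix ι ι R} (hP : P ∈ rowStochastic R ι) :
    Disjoint (LinearMap.ker (1 - P).mulVecLin) (LinearMap.range (1 - P).mulVecLin) := by
  rw [Submodule.disjoint_def]
  rintro x hx ⟨w, hw⟩
  rw [mulVecLin_one_sub_apply] at hw
  exact eq_zero_of_mulVec_eq_self_of_sub_mulVec_eq hP (mem_ker_mulVecLin_one_sub.mp hx) hw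

lemma isCompl_ker_range_one_sub_of_mem_rowStochastic [Field R] [LinearOrder R]
    [IsStrictOrderedRing R] {P : Matrix ι ι R} (hP : P ∈ rowStochastic R ι) :
    IsCompl (LinearMap.ker (1 - P).mulVecLin) (LinearMap.range (1 - P).mulVecLin) := by
  refine (Submodule.isCompl_iff_disjoint _ _ ?_).mpr
    (disjoint_ker_range_one_sub_of_mem_rowStochastic hP)
  rw [add_comm, LinearMap.finrank_range_add_finrank_ker]

lemma IsClosedClass.sum_mul_eq_of_sub_mem_range [CommRing R] [PartialOrder R] {P : Matrix ι ι R}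
    {F : Finset ι} (hF : IsClosedClass P (F : Set ι)) (hP : ∀ i j, 0 ≤ P i j) {π η r : ι → R}
    (hπ : ∀ j ∈ F, ∑ i ∈ F, π i * P i j = π j)
    (hηr : η - r ∈ LinearMap.range (1 - P).mulVecLin) :
    ∑ j ∈ F, π j * η j = ∑ j ∈ F, π j * r j := by
  obtain ⟨w, hw⟩ := hηr
  rw [mulVecLin_one_sub_apply] at hw
  rw [← sub_eq_zero]
  calc ∑ j ∈ F, π j * η j - ∑ j ∈ F, π j * r j
      = ∑ j ∈ F, π j * (η - r) j := by
        simp only [Pi.sub_apply, mul_sub, Finset.sum_sub_distrib]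
    _ = ∑ j ∈ F, π j * (w - P *ᵥ w) j := by rw [hw]
    _ = ∑ j ∈ F, π j * w j - ∑ j ∈ F, π j * (P *ᵥ w) j := by
        simp only [Pi.sub_apply, mul_sub, Finset.sum_sub_distrib]
    _ = 0 := by rw [hF.sum_mul_mulVec_eq hP hπ, sub_self]

end KerRange

theorem mean_payoff_vector_unique_general {ι K : Type*} [Fintype ι] [DecidableEq ι] [Field K]
    [LinearOrder K] [IsStrictOrderedRing K] {P : Matrix ι ι K} (hP : P ∈ rowStochastic K ι)
    (r : ι → K) :
    ∃ η : ι → K,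
      (P *ᵥ η = η ∧ η - r ∈ LinearMap.range (1 - P).mulVecLin) ∧
      (∀ η' : ι → K, P *ᵥ η' = η' → η' - r ∈ LinearMap.range (1 - P).mulVecLin → η' = η) ∧
      ∀ F : Finset ι, IsClosedClass P (F : Set ι) →
        (∀ i ∈ F, ∀ j ∈ F, Relation.ReflTransGen (fun a b => 0 < P a b) i j) →
        ∀ π : ι → K, ∑ j ∈ F, π j = 1 → (∀ j ∈ F, ∑ i ∈ F, π i * P i j = π j) →
          ∀ i ∈ F, η i = ∑ j ∈ F, π j * r j := by
  obtain ⟨η, ⟨hker, hrange⟩, huniq⟩ := existsUnique_mem_and_sub_mem_of_isCompl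
    (isCompl_ker_range_one_sub_of_mem_rowStochastic hP) r
  have hη : P *ᵥ η = η := mem_ker_mulVecLin_one_sub.mp hker
  refine ⟨η, ⟨hη, hrange⟩,
    fun η' hη' hrange' => huniq η' ⟨mem_ker_mulVecLin_one_sub.mpr hη', hrange'⟩, ?_⟩
  intro F hF hconn π hsum hπ i hi
  have hconst : ∀ j ∈ F, η j = η i := fun j hj =>
    hF.apply_eq_apply_of_mulVec_le hP hconn hη.le hj hi
  calc η i = ∑ j ∈ F, π j * η i := by rw [← Finset.sum_mul, hsum, one_mul]
    _ = ∑ j ∈ F, π j * η j := Finset.sum_congr rfl fun j hj => by rw [hconst j hj]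
    _ = ∑ j ∈ F, π j * r j := hF.sum_mul_eq_of_sub_mem_range hP.1 hπ hrange

/-- Let `P` be an `n×n` stochastic matrix and `r ∈ ℝⁿ`.  Then there is
a unique `η` with `Pη = η` and `η − r ∈ range(I − P)`; moreover for each final class `F`
of `P`, letting `π` be the (unique) stationary probability vector of the `F×F` submatrix
of `P`, one has `η_i = Σ_{j∈F} π_j r_j` for every `i ∈ F`. -/
theorem mean_payoff_vector_unique
    (n : ℕ) (P : Matrix (Fin n) (Fin n) ℝ) (hP : IsStochastic P) (r : Fin n → ℝ) :
    ∃ η : Fin n → ℝ,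
      (P.mulVec η = η ∧ η - r ∈ LinearMap.range (Matrix.mulVecLin (1 - P))) ∧
      (∀ η' : Fin n → ℝ, P.mulVec η' = η' →
        η' - r ∈ LinearMap.range (Matrix.mulVecLin (1 - P)) → η' = η) ∧
      ∀ F : Finset (Fin n), IsFinalClass P F →
        ∀ π : Fin n → ℝ, (∀ j, 0 ≤ π j) → (∀ j ∉ F, π j = 0) →
          (∑ j ∈ F, π j = 1) → (∀ j ∈ F, ∑ i ∈ F, π i * P i j = π j) →
          ∀ i ∈ F, η i = ∑ j ∈ F, π j * r j := by
  obtain ⟨η, hη, huniq, hfinal⟩ :=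
    mean_payoff_vector_unique_general (mem_rowStochastic_iff_sum.mpr hP) r
  exact ⟨η, hη, huniq, fun F hF π _ _ => hfinal F hF.2.2 hF.2.1 π⟩
end
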